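/- For every complex number z with 0 < |z| < 1 that lies in the interior of one of the regions R(1), R(2), R(3), one has (1/n)·ln|F_n(z)| → 0 as n → ∞. -/

import Mathlib

open Complex Filter

/-- `partsCount k n` is the number of partitions of `n` with exactly `k` parts. -/
noncomputable def partsCount (k n : ℕ) : ℕ := Nat.card {p : Nat.Partition n // p.parts.card = k}

/-- The partition polynomial `F_n(x) = ∑_{k=1}^n p_k(n) x^k`. -/
noncomputable def F (n : ℕ) (x : ℂ) : ℂ := ∑ k ∈ Finset.Icc 1 n, (partsCount k n : ℂ) * x ^ k

/-- The dilogarithm `Li₂(z) = ∑_{n=1}^∞ zⁿ/n²`. -/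
noncomputable def dilog (z : ℂ) : ℂ := ∑' n : ℕ, z ^ (n + 1) / ((n : ℂ) + 1) ^ 2

/-- `fk k x = (1/k)·Re √(Li₂(x^k))` with the principal branch square root. -/
noncomputable def fk (k : ℕ) (x : ℂ) : ℝ := (1 / (k : ℝ)) * ((dilog (x ^ k)) ^ (1 / 2 : ℂ)).re

/-- The region `R(1)`. -/
def R1 : Set ℂ := {x | ‖x‖ < 1 ∧ fk 2 x ≤ fk 1 x ∧ fk 3 x ≤ fk 1 x}

/-- The region `R(2)`. -/
def R2 : Set ℂ := {x | ‖x‖ < 1 ∧ fk 1 x ≤ fk 2 x ∧ fk 3 x ≤ fk 2 x}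

/-- The region `R(3)`. -/
def R3 : Set ℂ := {x | ‖x‖ < 1 ∧ fk 1 x ≤ fk 3 x ∧ fk 2 x ≤ fk 3 x}

lemma cpow_half_sq (L : ℂ) : (L ^ (1 / 2 : ℂ)) ^ 2 = L := by
  rw [one_div]; exact Complex.cpow_ofNat_inv_pow L 2

lemma cpow_half_re_nonneg (L : ℂ) : 0 ≤ (L ^ (1 / 2 : ℂ)).re := by
  by_cases h : L = 0
  · subst h; simp
  rw [Complex.cpow_def_of_ne_zero h, Complex.exp_re]
  apply mul_nonneg (Real.exp_pos _).le
  apply Real.cos_nonneg_of_mem_Icc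
  have h1 := Complex.arg_le_pi L
  have h2 := Complex.neg_pi_lt_arg L
  have : (Complex.log L * (1 / 2 : ℂ)).im = Complex.arg L / 2 := by
    rw [show (1 / 2 : ℂ) = ((1 / 2 : ℝ) : ℂ) by push_cast; rfl, Complex.im_mul_ofReal, Complex.log_im]
    ring
  rw [this]
  constructor <;> linarith

lemma re_sq_of_sq {s L : ℂ} (h : s ^ 2 = L) : s.re ^ 2 = (‖L‖ + L.re) / 2 := by
  have h1 : ‖L‖ = s.re ^ 2 + s.im ^ 2 := by
    rw [← h, norm_pow, Complex.sq_norm, Complex.normSq_apply]; ring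
  have h2 : L.re = s.re ^ 2 - s.im ^ 2 := by
    rw [← h, pow_two, Complex.mul_re]; ring
  rw [h1, h2]; ring

lemma fk_nonneg (k : ℕ) (x : ℂ) : 0 ≤ fk k x := by
  unfold fk
  have := cpow_half_re_nonneg (dilog (x ^ k))
  positivity

lemma fk_sq (k : ℕ) (x : ℂ) :
    fk k x ^ 2 = (‖dilog (x ^ k)‖ + (dilog (x ^ k)).re) / (2 * (k : ℝ) ^ 2) := by
  unfold fk
  rw [mul_pow, re_sq_of_sq (cpow_half_sq _)]
  ring

/-- any square root computes `fk`. -/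
lemma fk_eq_abs (k : ℕ) (x s : ℂ) (h : s ^ 2 = dilog (x ^ k)) : fk k x = |s.re| / k := by
  unfold fk
  have h1 := re_sq_of_sq h
  have h2 := re_sq_of_sq (cpow_half_sq (dilog (x ^ k)))
  have h3 : |s.re| = ((dilog (x ^ k)) ^ (1 / 2 : ℂ)).re := by
    rw [← abs_of_nonneg (cpow_half_re_nonneg (dilog (x ^ k)))]
    apply (sq_eq_sq_iff_abs_eq_abs _ _).1
    rw [h1, h2]
  rw [h3]; ring

lemma summable_inv_sq : Summable (fun n : ℕ => 1 / ((n : ℝ) + 1) ^ 2) := by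
  have := (summable_nat_add_iff 1).2 hasSum_zeta_two.summable
  simpa using this

lemma tsum_inv_sq_le : ∑' n : ℕ, 1 / ((n : ℝ) + 1) ^ 2 ≤ 1.645 := by
  have h := hasSum_zeta_two
  have h2 := h.summable.tsum_eq_zero_add
  rw [h.tsum_eq] at h2
  simp only [Nat.cast_zero, ne_eq, OfNat.ofNat_ne_zero, not_false_eq_true, zero_pow, div_zero,
    zero_add, Nat.cast_add, Nat.cast_one] at h2
  rw [← h2]
  have := Real.pi_lt_d4
  have := Real.pi_pos
  nlinarith

lemma norm_dilog_term (x : ℂ) (n : ℕ) :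
    ‖x ^ (n + 1) / ((n : ℂ) + 1) ^ 2‖ = ‖x‖ ^ (n + 1) * (1 / ((n : ℝ) + 1) ^ 2) := by
  rw [norm_div, norm_pow, norm_pow]
  have : ‖(n : ℂ) + 1‖ = (n : ℝ) + 1 := by
    rw [show (n : ℂ) + 1 = ((n + 1 : ℕ) : ℂ) by push_cast; rfl, Complex.norm_natCast]; push_cast; rfl
  rw [this]; ring

lemma norm_dilog_term_le {x : ℂ} (hx : ‖x‖ ≤ 1) (n : ℕ) :
    ‖x ^ (n + 1) / ((n : ℂ) + 1) ^ 2‖ ≤ ‖x‖ * (1 / ((n : ℝ) + 1) ^ 2) := by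
  rw [norm_dilog_term]
  gcongr
  rw [pow_succ]
  exact mul_le_of_le_one_left (norm_nonneg _) (pow_le_one₀ (norm_nonneg _) hx)

lemma summable_norm_dilog {x : ℂ} (hx : ‖x‖ ≤ 1) :
    Summable (fun n : ℕ => ‖x ^ (n + 1) / ((n : ℂ) + 1) ^ 2‖) :=
  Summable.of_nonneg_of_le (fun _ => norm_nonneg _) (norm_dilog_term_le hx)
    (summable_inv_sq.mul_left _)

lemma hasSum_dilog {x : ℂ} (hx : ‖x‖ ≤ 1) :
    HasSum (fun n : ℕ => x ^ (n + 1) / ((n : ℂ) + 1) ^ 2) (dilog x) :=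
  (summable_norm_dilog hx).of_norm.hasSum

lemma norm_dilog_le {x : ℂ} (hx : ‖x‖ ≤ 1) : ‖dilog x‖ ≤ 1.645 * ‖x‖ := by
  have := tsum_of_norm_bounded (summable_inv_sq.mul_left ‖x‖).hasSum (norm_dilog_term_le hx)
  rw [tsum_mul_left] at this
  refine this.trans ?_
  rw [mul_comm]
  exact mul_le_mul_of_nonneg_right tsum_inv_sq_le (norm_nonneg _)

lemma norm_dilog_sub_le {x : ℂ} (hx : ‖x‖ ≤ 1) : ‖dilog x - x‖ ≤ 0.645 * ‖x‖ := by
  have h0 := (hasSum_dilog hx).summable.tsum_eq_zero_add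
  have h1 : dilog x - x = ∑' n : ℕ, x ^ (n + 1 + 1) / (((n + 1 : ℕ) : ℂ) + 1) ^ 2 := by
    have : dilog x = ∑' n : ℕ, x ^ (n + 1) / ((n : ℂ) + 1) ^ 2 := rfl
    rw [this, h0]; simp
  have hs := (summable_nat_add_iff 1).2 summable_inv_sq
  have h2 := tsum_of_norm_bounded (hs.mul_left ‖x‖).hasSum
    (fun n => norm_dilog_term_le hx (n + 1))
  rw [tsum_mul_left] at h2
  rw [h1]
  refine h2.trans ?_
  have h3 := summable_inv_sq.tsum_eq_zero_add
  have h4 := tsum_inv_sq_le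
  rw [h3] at h4
  norm_num at h4
  have h5 : ∑' n : ℕ, 1 / (((n + 1 : ℕ) : ℝ) + 1) ^ 2 ≤ 0.645 := by
    have : ∑' n : ℕ, 1 / (((n + 1 : ℕ) : ℝ) + 1) ^ 2 = ∑' b : ℕ, (((b : ℝ) + 1 + 1) ^ 2)⁻¹ := by
      congr 1; ext n; push_cast; rw [one_div]
    rw [this]; norm_num; linarith
  rw [mul_comm]
  exact mul_le_mul_of_nonneg_right h5 (norm_nonneg _)

lemma dilog_ne_zero {x : ℂ} (hx : ‖x‖ ≤ 1) (h0 : x ≠ 0) : dilog x ≠ 0 := by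
  intro h
  have := norm_dilog_sub_le hx
  rw [h, zero_sub, norm_neg] at this
  have := norm_pos_iff.2 h0
  linarith

lemma fk_sq_le {k : ℕ} (hk : 1 ≤ k) {x : ℂ} (hx : ‖x‖ ≤ 1) :
    fk k x ^ 2 ≤ 1.645 * ‖x‖ ^ k / (k : ℝ) ^ 2 := by
  have hxk : ‖x ^ k‖ ≤ 1 := by rw [norm_pow]; exact pow_le_one₀ (norm_nonneg _) hx
  have h := norm_dilog_le hxk
  rw [norm_pow] at h
  have h2 := Complex.re_le_norm (dilog (x ^ k))
  have hk' : (0 : ℝ) < k := by exact_mod_cast hk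
  rw [fk_sq, div_le_div_iff₀ (by positivity) (by positivity)]
  have : (0:ℝ) < (k:ℝ)^2 := by positivity
  nlinarith

/-- Tail of the dilogarithm after four terms. -/
noncomputable def dilogTail (x : ℂ) : ℂ := ∑' n : ℕ, x ^ (n + 5) / ((n : ℂ) + 5) ^ 2

lemma dilog_split {x : ℂ} (hx : ‖x‖ ≤ 1) :
    dilog x = x + x ^ 2 / 4 + x ^ 3 / 9 + x ^ 4 / 16 + dilogTail x := by
  have h := (hasSum_dilog hx).summable.sum_add_tsum_nat_add 4
  have h1 : dilog x = ∑' n : ℕ, x ^ (n + 1) / ((n : ℂ) + 1) ^ 2 := rfl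
  rw [h1, ← h]
  congr 1
  · simp [Finset.sum_range_succ]; norm_num
  · unfold dilogTail
    congr 1; ext n; push_cast; ring_nf

lemma norm_tail_term (x : ℂ) (n : ℕ) :
    ‖x ^ (n + 5) / ((n : ℂ) + 5) ^ 2‖ = ‖x‖ ^ (n + 5) * (1 / ((n : ℝ) + 5) ^ 2) := by
  rw [norm_div, norm_pow, norm_pow]
  have : ‖(n : ℂ) + 5‖ = (n : ℝ) + 5 := by
    rw [show (n : ℂ) + 5 = ((n + 5 : ℕ) : ℂ) by push_cast; rfl, Complex.norm_natCast]; push_cast; rfl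
  rw [this]; ring

lemma summable_inv_sq5 : Summable (fun n : ℕ => 1 / ((n : ℝ) + 5) ^ 2) := by
  have := (summable_nat_add_iff 5).2 hasSum_zeta_two.summable
  simpa using this

lemma norm_tail_term_le {x : ℂ} (hx : ‖x‖ ≤ 1) (n : ℕ) :
    ‖x ^ (n + 5) / ((n : ℂ) + 5) ^ 2‖ ≤ ‖x‖ ^ 5 * (1 / ((n : ℝ) + 5) ^ 2) := by
  rw [norm_tail_term]
  gcongr ?_ * _
  exact pow_le_pow_of_le_one (norm_nonneg _) hx (by omega)

lemma summable_tail {x : ℂ} (hx : ‖x‖ ≤ 1) :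
    Summable (fun n : ℕ => x ^ (n + 5) / ((n : ℂ) + 5) ^ 2) :=
  (Summable.of_nonneg_of_le (fun _ => norm_nonneg _) (norm_tail_term_le hx)
    (summable_inv_sq5.mul_left _)).of_norm

lemma norm_tail_le {x : ℂ} (hx : ‖x‖ ≤ 1) : ‖dilogTail x‖ ≤ 0.2214 * ‖x‖ ^ 5 := by
  have := tsum_of_norm_bounded (summable_inv_sq5.mul_left (‖x‖ ^ 5)).hasSum (norm_tail_term_le hx)
  rw [tsum_mul_left] at this
  refine this.trans ?_
  rw [mul_comm]
  refine mul_le_mul_of_nonneg_right ?_ (by positivity)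
  have h := summable_inv_sq.sum_add_tsum_nat_add 4
  have h4 := tsum_inv_sq_le
  rw [← h] at h4
  have h5 : ∑' n : ℕ, 1 / (((n + 4 : ℕ) : ℝ) + 1) ^ 2 = ∑' n : ℕ, 1 / ((n : ℝ) + 5) ^ 2 := by
    congr 1; ext n; push_cast; ring_nf
  rw [h5] at h4
  simp [Finset.sum_range_succ] at h4
  norm_num at h4 ⊢
  linarith

lemma norm_tail_abel {x : ℂ} (hx : ‖x‖ ≤ 1) :
    ‖(1 - x) * dilogTail x‖ ≤ 2 / 25 * ‖x‖ ^ 5 := by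
  have hs := summable_tail hx
  have h1 : (1 - x) * dilogTail x = x ^ 5 / 25 +
      ∑' n : ℕ, (x ^ (n + 6) / ((n : ℂ) + 6) ^ 2 - x ^ (n + 6) / ((n : ℂ) + 5) ^ 2) := by
    have e1 := hs.tsum_eq_zero_add
    have e2 : x * dilogTail x = ∑' n : ℕ, x ^ (n + 6) / ((n : ℂ) + 5) ^ 2 := by
      unfold dilogTail
      rw [← tsum_mul_left]; congr 1; ext n; ring
    have e3 : dilogTail x = x ^ 5 / 25 + ∑' n : ℕ, x ^ (n + 6) / ((n : ℂ) + 6) ^ 2 := by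
      unfold dilogTail
      rw [e1]; congr 1
      · norm_num
      · congr 1; ext n; push_cast; ring_nf
    have s1 : Summable (fun n : ℕ => x ^ (n + 6) / ((n : ℂ) + 6) ^ 2) := by
      have := (summable_nat_add_iff 1).2 hs
      refine this.congr fun n => ?_
      push_cast; ring_nf
    have s2 : Summable (fun n : ℕ => x ^ (n + 6) / ((n : ℂ) + 5) ^ 2) := by
      refine (hs.mul_left x).congr fun n => ?_
      ring
    rw [s1.tsum_sub s2, sub_mul, one_mul, e2]
    nth_rw 1 [e3]; ring
  have t1 : Summable (fun n : ℕ => 1 / ((n : ℝ) + 6) ^ 2) := by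
    have := (summable_nat_add_iff 6).2 hasSum_zeta_two.summable
    simpa using this
  have h2 : ∑' n : ℕ, (1 / ((n : ℝ) + 5) ^ 2 - 1 / ((n : ℝ) + 6) ^ 2) = 1 / 25 := by
    rw [summable_inv_sq5.tsum_sub t1, summable_inv_sq5.tsum_eq_zero_add]
    have : ∑' n : ℕ, 1 / (((n + 1 : ℕ) : ℝ) + 5) ^ 2 = ∑' n : ℕ, 1 / ((n : ℝ) + 6) ^ 2 := by
      congr 1; ext n; push_cast; ring_nf
    rw [this]; norm_num
  have h3 : ∀ n : ℕ, ‖x ^ (n + 6) / ((n : ℂ) + 6) ^ 2 - x ^ (n + 6) / ((n : ℂ) + 5) ^ 2‖ ≤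
      ‖x‖ ^ 5 * (1 / ((n : ℝ) + 5) ^ 2 - 1 / ((n : ℝ) + 6) ^ 2) := by
    intro n
    have e : x ^ (n + 6) / ((n : ℂ) + 6) ^ 2 - x ^ (n + 6) / ((n : ℂ) + 5) ^ 2 =
        - (x ^ (n + 6) * ((1 / ((n : ℝ) + 5) ^ 2 - 1 / ((n : ℝ) + 6) ^ 2 : ℝ) : ℂ)) := by
      push_cast; ring
    have hp : 0 ≤ 1 / ((n : ℝ) + 5) ^ 2 - 1 / ((n : ℝ) + 6) ^ 2 := by
      rw [sub_nonneg]; gcongr; norm_num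
    rw [e, norm_neg, norm_mul, Complex.norm_real, Real.norm_of_nonneg hp, norm_pow]
    gcongr ?_ * _
    exact pow_le_pow_of_le_one (norm_nonneg _) hx (by omega)
  have h4 := tsum_of_norm_bounded (((summable_inv_sq5.sub t1).mul_left (‖x‖ ^ 5)).hasSum) h3
  rw [tsum_mul_left, h2] at h4
  rw [h1]
  refine (norm_add_le _ _).trans ?_
  rw [norm_div, norm_pow]
  norm_num at h4 ⊢
  linarith

lemma re_pows (x : ℂ) {r a : ℝ} (hr : ‖x‖ = r) (ha : x.re = a) :
    (x ^ 2).re = 2 * a ^ 2 - r ^ 2 ∧ (x ^ 3).re = 4 * a ^ 3 - 3 * a * r ^ 2 ∧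
    (x ^ 4).re = 8 * a ^ 4 - 8 * a ^ 2 * r ^ 2 + r ^ 4 := by
  have h : r ^ 2 = x.re ^ 2 + x.im ^ 2 := by
    rw [← hr, Complex.sq_norm, Complex.normSq_apply]; ring
  have h4 : r ^ 4 = (x.re ^ 2 + x.im ^ 2) ^ 2 := by rw [← h]; ring
  refine ⟨?_, ?_, ?_⟩ <;> simp only [h, h4, ← ha, pow_succ, pow_zero, one_mul, Complex.mul_re, Complex.mul_im] <;> ring

lemma norm_one_sub_sq (x : ℂ) : ‖1 - x‖ ^ 2 = 1 - 2 * x.re + ‖x‖ ^ 2 := by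
  rw [Complex.sq_norm, Complex.sq_norm, Complex.normSq_apply, Complex.normSq_apply]
  simp; ring

lemma dilog_re_nonpos {y : ℂ} (hy : ‖y‖ ≤ 1) (h : y.re ≤ 0) : (dilog y).re ≤ 0 := by
  obtain ⟨h2, h3, h4⟩ := re_pows y rfl rfl
  have ht := norm_tail_abel hy
  have hn := norm_one_sub_sq y
  set r := ‖y‖ with hr
  have r0 : 0 ≤ r := norm_nonneg _
  have h1 : 1 ≤ ‖1 - y‖ := by
    have : (1:ℝ) ^ 2 ≤ ‖1 - y‖ ^ 2 := by rw [hn]; nlinarith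
    exact (pow_le_pow_iff_left₀ (by norm_num) (norm_nonneg _) (by norm_num)).1 this
  have hT : ‖dilogTail y‖ ≤ 2 / 25 * r ^ 5 := by
    rw [norm_mul] at ht
    nlinarith [norm_nonneg (dilogTail y)]
  have hTr := (Complex.re_le_norm (dilogTail y)).trans hT
  rw [dilog_split hy]
  have e2 : (y ^ 2 / 4).re = (y ^ 2).re / 4 := by
    rw [show (4:ℂ) = ((4:ℝ):ℂ) by norm_num, Complex.div_ofReal_re]
  have e3 : (y ^ 3 / 9).re = (y ^ 3).re / 9 := by
    rw [show (9:ℂ) = ((9:ℝ):ℂ) by norm_num, Complex.div_ofReal_re]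
  have e4 : (y ^ 4 / 16).re = (y ^ 4).re / 16 := by
    rw [show (16:ℂ) = ((16:ℝ):ℂ) by norm_num, Complex.div_ofReal_re]
  simp only [Complex.add_re, e2, e3, e4, h2, h3, h4]
  have hab := Complex.abs_re_le_norm y
  rw [abs_of_nonpos h] at hab
  obtain ⟨u, hu⟩ : ∃ u, u = -y.re := ⟨_, rfl⟩
  have hy' : y.re = -u := by linarith
  rw [hy'] at h hab ⊢
  have u0 : 0 ≤ u := by linarith
  have ur : u ≤ r := by linarith
  have r2 : r ^ 2 ≤ 1 := pow_le_one₀ r0 hy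
  have r5 : r ^ 5 ≤ r ^ 2 := pow_le_pow_of_le_one r0 hy (by norm_num)
  have r4 : r ^ 4 ≤ r ^ 2 := pow_le_pow_of_le_one r0 hy (by norm_num)
  have k1 : u * r ^ 2 ≤ u := by nlinarith
  have k2 : u ^ 2 ≤ u := by nlinarith
  have k3 : 0 ≤ u ^ 3 := by positivity
  have k4 : u ^ 4 ≤ u ^ 2 * r ^ 2 := by
    have : u ^ 2 ≤ r ^ 2 := pow_le_pow_left₀ u0 ur 2
    calc u ^ 4 = u ^ 2 * u ^ 2 := by ring
      _ ≤ _ := mul_le_mul_of_nonneg_left this (sq_nonneg u)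
  nlinarith

lemma key1 {x : ℂ} (hx : ‖x‖ ≤ 1) (h0 : x ≠ 0) {r W : ℝ} (hr : ‖x‖ = r)
    (hW : x.re = r * (W - 2) / 2) :
    r * (W / 4) * (1 + r * (W - 3) / 4 + r ^ 2 * (W ^ 2 - 5 * W + 5) / 9
      + r ^ 3 * (W ^ 3 - 7 * W ^ 2 + 14 * W - 7) / 16) - Real.sqrt W / 2 * ‖dilogTail x‖
      ≤ fk 1 x ^ 2 := by
  have rpos : 0 < r := hr ▸ norm_pos_iff.2 h0
  rw [fk_sq]
  simp only [pow_one, Nat.cast_one, one_pow, mul_one]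
  set y : ℂ := (r : ℂ) + (starRingEnd ℂ) x with hy
  have hsq : r ^ 2 = x.re ^ 2 + x.im ^ 2 := by
    rw [← hr, Complex.sq_norm, Complex.normSq_apply]; ring
  have hny : ‖y‖ = r * Real.sqrt W := by
    have h1 : ‖y‖ ^ 2 = r ^ 2 * W := by
      rw [Complex.sq_norm, Complex.normSq_apply]
      simp only [hy, Complex.add_re, Complex.add_im, Complex.ofReal_re, Complex.ofReal_im,
        Complex.conj_re, Complex.conj_im]
      nlinarith
    have h2 : Real.sqrt (‖y‖ ^ 2) = ‖y‖ := Real.sqrt_sq (norm_nonneg _)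
    rw [← h2, h1, Real.sqrt_mul (by positivity), Real.sqrt_sq rpos.le]
  -- lower bound
  have hA : (dilog x * y).re ≤ r * (‖dilog x‖ + (dilog x).re) := by
    have : (dilog x * y).re = r * (dilog x).re + (dilog x * (starRingEnd ℂ) x).re := by
      rw [hy, mul_add, Complex.add_re]; simp [mul_comm]
    rw [this]
    have h2 := Complex.re_le_norm (dilog x * (starRingEnd ℂ) x)
    rw [norm_mul, RCLike.norm_conj, hr] at h2
    linarith
  have hB : (dilog x * y).re = ((x + x ^ 2 / 4 + x ^ 3 / 9 + x ^ 4 / 16) * y).re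
      + (dilogTail x * y).re := by
    rw [dilog_split hx, add_mul, Complex.add_re]
  have hC : -(‖dilogTail x‖ * (r * Real.sqrt W)) ≤ (dilogTail x * y).re := by
    have := (abs_le.1 (Complex.abs_re_le_norm (dilogTail x * y))).1
    rwa [norm_mul, hny] at this
  obtain ⟨h2, h3, h4⟩ := re_pows x hr hW
  have hD : (x + x ^ 2 / 4 + x ^ 3 / 9 + x ^ 4 / 16) * y =
      r * x + r * x ^ 2 / 4 + r * x ^ 3 / 9 + r * x ^ 4 / 16 +
      (r ^ 2 : ℝ) * (1 + x / 4 + x ^ 2 / 9 + x ^ 3 / 16) := by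
    have : x * (starRingEnd ℂ) x = ((r ^ 2 : ℝ) : ℂ) := by
      rw [Complex.mul_conj, Complex.normSq_eq_norm_sq, hr]
    rw [hy, ← this]; ring
  have e (z : ℂ) (m : ℝ) : (z / (m : ℂ)).re = z.re / m := Complex.div_ofReal_re z m
  have hE : ((x + x ^ 2 / 4 + x ^ 3 / 9 + x ^ 4 / 16) * y).re = r ^ 2 * (W / 2) *
      (1 + r * (W - 3) / 4 + r ^ 2 * (W ^ 2 - 5 * W + 5) / 9
      + r ^ 3 * (W ^ 3 - 7 * W ^ 2 + 14 * W - 7) / 16) := by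
    rw [hD, show (4:ℂ) = ((4:ℝ):ℂ) by norm_num, show (9:ℂ) = ((9:ℝ):ℂ) by norm_num,
      show (16:ℂ) = ((16:ℝ):ℂ) by norm_num]
    simp only [Complex.add_re, e, Complex.re_ofReal_mul, h2, h3, h4, hW, Complex.one_re]
    ring
  have hF : r * (‖dilog x‖ + (dilog x).re) ≥ r * (r * (W / 2) *
      (1 + r * (W - 3) / 4 + r ^ 2 * (W ^ 2 - 5 * W + 5) / 9
      + r ^ 3 * (W ^ 3 - 7 * W ^ 2 + 14 * W - 7) / 16) - ‖dilogTail x‖ * Real.sqrt W) := by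
    linarith [hA, hB, hC, hE]
  have hG := le_of_mul_le_mul_left hF rpos
  linarith

lemma tail_bd {x : ℂ} (hx : ‖x‖ ≤ 1) (h0 : x ≠ 0) {r W : ℝ} (hr : ‖x‖ = r)
    (hW : x.re = r * (W - 2) / 2) {g : ℝ} (hg : 0 < g) (hgW : g ^ 2 ≤ 4 - W) :
    ‖dilogTail x‖ ≤ 2 / 25 * r ^ 4 / g := by
  have rpos : 0 < r := hr ▸ norm_pos_iff.2 h0
  have ht := norm_tail_abel hx
  have hn := norm_one_sub_sq x
  rw [hW, hr] at hn
  have h1 : (r * g) ^ 2 ≤ ‖1 - x‖ ^ 2 := by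
    rw [hn, mul_pow]
    nlinarith [sq_nonneg (1 - r), mul_le_mul_of_nonneg_left hgW (sq_nonneg r),
      sq_nonneg x.im, abs_le.1 (Complex.abs_re_le_norm x)]
  have h2 : r * g ≤ ‖1 - x‖ :=
    (pow_le_pow_iff_left₀ (by positivity) (norm_nonneg _) (by norm_num)).1 h1
  rw [norm_mul, hr] at ht
  rw [le_div_iff₀ hg]
  have h3 : r * (‖dilogTail x‖ * g) ≤ r * (2 / 25 * r ^ 4) := by
    have := mul_le_mul_of_nonneg_right h2 (norm_nonneg (dilogTail x))
    linarith
  exact le_of_mul_le_mul_left h3 rpos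

lemma sqrt_le_lin {W l : ℝ} (hl : 0 < l) (hW : 0 ≤ W) : Real.sqrt W ≤ (W / l + l) / 2 := by
  have h := Real.sq_sqrt hW
  rw [div_add' _ _ _ hl.ne', div_div, le_div_iff₀ (by positivity)]
  nlinarith [sq_nonneg (Real.sqrt W - l)]

/-- Bernstein form positivity of a cubic on `[0,1]`. -/
lemma cubic_pos {A0 A1 A2 A3 r : ℝ} (h0 : 0 ≤ r) (h1 : r ≤ 1) (b0 : 0 < A0)
    (b1 : 0 < 3 * A0 + A1) (b2 : 0 < 3 * A0 + 2 * A1 + A2) (b3 : 0 < A0 + A1 + A2 + A3) :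
    0 < A0 + A1 * r + A2 * r ^ 2 + A3 * r ^ 3 := by
  have e : A0 + A1 * r + A2 * r ^ 2 + A3 * r ^ 3 = A0 * (1 - r) ^ 3 + (3 * A0 + A1) * (r * (1 - r) ^ 2)
    + (3 * A0 + 2 * A1 + A2) * (r ^ 2 * (1 - r)) + (A0 + A1 + A2 + A3) * r ^ 3 := by ring
  rw [e]
  rcases eq_or_lt_of_le h0 with h | h
  · rw [← h]; simpa using b0
  · have : 0 ≤ 1 - r := by linarith
    have : 0 < (A0 + A1 + A2 + A3) * r ^ 3 := by positivity
    have : 0 ≤ A0 * (1 - r) ^ 3 := by positivity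
    have : 0 ≤ (3 * A0 + A1) * (r * (1 - r) ^ 2) := by positivity
    have : 0 ≤ (3 * A0 + 2 * A1 + A2) * (r ^ 2 * (1 - r)) := by positivity
    linarith

/-- Combined lower bound reduced to polynomial conditions in `W`. -/
lemma lower_of_poly {x : ℂ} (hx : ‖x‖ ≤ 1) (h0 : x ≠ 0) {r W : ℝ} (hr : ‖x‖ = r)
    (hW : x.re = r * (W - 2) / 2) (hW0 : 0 < W) {l t B1 B3 : ℝ} (hl : 0 < l) (_ht : 0 ≤ t)
    (hT : ‖dilogTail x‖ ≤ t * r ^ 4)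
    (b1 : 0 < 3 * (W / 4) + (W / 4 * ((W - 3) / 4) - B1))
    (b2 : 0 < 3 * (W / 4) + 2 * (W / 4 * ((W - 3) / 4) - B1) + W / 4 * ((W ^ 2 - 5 * W + 5) / 9))
    (b3 : 0 < W / 4 + (W / 4 * ((W - 3) / 4) - B1) + W / 4 * ((W ^ 2 - 5 * W + 5) / 9)
      + (W / 4 * ((W ^ 3 - 7 * W ^ 2 + 14 * W - 7) / 16) - (W / l + l) / 4 * t - B3)) :
    B1 * r ^ 2 + B3 * r ^ 4 < fk 1 x ^ 2 := by
  have rpos : 0 < r := hr ▸ norm_pos_iff.2 h0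
  have h1 := key1 hx h0 hr hW
  have h2 := sqrt_le_lin hl hW0.le
  have h3 : Real.sqrt W / 2 * ‖dilogTail x‖ ≤ (W / l + l) / 4 * (t * r ^ 4) := by
    have : Real.sqrt W / 2 ≤ (W / l + l) / 4 := by linarith
    exact mul_le_mul this hT (norm_nonneg _) (by positivity)
  have h4 := cubic_pos rpos.le (hr ▸ hx) (by positivity) b1 b2 b3
  have h5 := mul_pos rpos h4
  refine lt_of_lt_of_le ?_ h1
  linarith

lemma low_i {x : ℂ} (hx : ‖x‖ ≤ 1) (h0 : x ≠ 0) {r W : ℝ} (hr : ‖x‖ = r)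
    (hW : x.re = r * (W - 2) / 2) (h1 : 0.62 ≤ W) (h2 : W ≤ 1.25) :
    0.0658 * r ^ 4 < fk 1 x ^ 2 := by
  have hT := tail_bd hx h0 hr hW (g := 1.6583) (by norm_num) (by norm_num; linarith)
  have := lower_of_poly hx h0 hr hW (by linarith) (l := 0.82) (t := 2 / 25 / 1.6583) (B1 := 0)
    (B3 := 0.0658) (by norm_num) (by norm_num) (hT.trans_eq (by ring)) ?_ ?_ ?_
  · linarith
  · nlinarith
  · nlinarith [mul_nonneg (sub_nonneg.2 h1) (sub_nonneg.2 h2)]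
  · have a := sub_nonneg.2 h1
    have b := sub_nonneg.2 h2
    norm_num
    nlinarith [mul_nonneg a b, mul_nonneg (mul_nonneg a b) a, mul_nonneg (mul_nonneg a b) b,
      mul_nonneg (mul_nonneg a b) (mul_nonneg a b), mul_nonneg (mul_nonneg a b) (mul_nonneg a a), mul_nonneg (mul_nonneg a b) (mul_nonneg b b)]

lemma low_ii {x : ℂ} (hx : ‖x‖ ≤ 1) (h0 : x ≠ 0) {r W : ℝ} (hr : ‖x‖ = r)
    (hW : x.re = r * (W - 2) / 2) (h1 : 1.2 ≤ W) (h2 : W ≤ 2) :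
    0.10282 * r ^ 4 < fk 1 x ^ 2 := by
  have hT := tail_bd hx h0 hr hW (g := 1.4142) (by norm_num) (by norm_num; linarith)
  have := lower_of_poly hx h0 hr hW (by linarith) (l := 1.2) (t := 2 / 25 / 1.4142) (B1 := 0)
    (B3 := 0.10282) (by norm_num) (by norm_num) (hT.trans_eq (by ring)) ?_ ?_ ?_
  · linarith
  · nlinarith
  · nlinarith [mul_nonneg (sub_nonneg.2 h1) (sub_nonneg.2 h2)]
  · have a := sub_nonneg.2 h1
    have b := sub_nonneg.2 h2
    norm_num
    nlinarith [mul_nonneg a b, mul_nonneg (mul_nonneg a b) a, mul_nonneg (mul_nonneg a b) b,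
      mul_nonneg (mul_nonneg a b) (mul_nonneg a b), mul_nonneg (mul_nonneg a b) (mul_nonneg a a), mul_nonneg (mul_nonneg a b) (mul_nonneg b b)]

lemma low_iii {x : ℂ} (hx : ‖x‖ ≤ 1) (h0 : x ≠ 0) {r W : ℝ} (hr : ‖x‖ = r)
    (hW : x.re = r * (W - 2) / 2) (h1 : 1.904 ≤ W) (h2 : W ≤ 3.42) :
    0.2632 * r ^ 2 < fk 1 x ^ 2 := by
  rcases le_total W 2.4 with h3 | h3
  · have hT := tail_bd hx h0 hr hW (g := 1.2649) (by norm_num) (by norm_num; linarith)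
    have := lower_of_poly hx h0 hr hW (by linarith) (l := 1.4) (t := 2 / 25 / 1.2649) (B1 := 0.2632)
      (B3 := 0) (by norm_num) (by norm_num) (hT.trans_eq (by ring)) ?_ ?_ ?_
    · linarith
    · nlinarith
    · nlinarith [mul_nonneg (sub_nonneg.2 h1) (sub_nonneg.2 h3)]
    · have a := sub_nonneg.2 h1
      have b := sub_nonneg.2 h3
      norm_num
      nlinarith [mul_nonneg a b, mul_nonneg (mul_nonneg a b) a, mul_nonneg (mul_nonneg a b) b,
        mul_nonneg (mul_nonneg a b) (mul_nonneg a b), mul_nonneg (mul_nonneg a b) (mul_nonneg a a), mul_nonneg (mul_nonneg a b) (mul_nonneg b b)]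
  · have hT := tail_bd hx h0 hr hW (g := 0.7615) (by norm_num) (by norm_num; linarith)
    have := lower_of_poly hx h0 hr hW (by linarith) (l := 1.7) (t := 2 / 25 / 0.7615) (B1 := 0.2632)
      (B3 := 0) (by norm_num) (by norm_num) (hT.trans_eq (by ring)) ?_ ?_ ?_
    · linarith
    · nlinarith
    · nlinarith [mul_nonneg (sub_nonneg.2 h3) (sub_nonneg.2 h2)]
    · have a := sub_nonneg.2 h3
      have b := sub_nonneg.2 h2
      norm_num
      nlinarith [mul_nonneg a b, mul_nonneg (mul_nonneg a b) a, mul_nonneg (mul_nonneg a b) b,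
        mul_nonneg (mul_nonneg a b) (mul_nonneg a b), mul_nonneg (mul_nonneg a b) (mul_nonneg a a), mul_nonneg (mul_nonneg a b) (mul_nonneg b b)]

lemma low_iv {x : ℂ} (hx : ‖x‖ ≤ 1) (h0 : x ≠ 0) {r W : ℝ} (hr : ‖x‖ = r)
    (hW : x.re = r * (W - 2) / 2) (h1 : 3.38 ≤ W) (h2 : W ≤ 4) :
    0.4113 * r ^ 2 < fk 1 x ^ 2 := by
  have rpos : 0 < r := hr ▸ norm_pos_iff.2 h0
  have hT : ‖dilogTail x‖ ≤ 0.2214 * r ^ 4 := by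
    refine (norm_tail_le hx).trans ?_
    rw [hr]
    gcongr ?_ * ?_
    exact pow_le_pow_of_le_one rpos.le (hr ▸ hx) (by norm_num)
  have := lower_of_poly hx h0 hr hW (by linarith) (l := 2) (t := 0.2214) (B1 := 0.4113)
    (B3 := 0) (by norm_num) (by norm_num) hT ?_ ?_ ?_
  · linarith
  · nlinarith
  · nlinarith [mul_nonneg (sub_nonneg.2 h1) (sub_nonneg.2 h2)]
  · have a := sub_nonneg.2 h1
    have b := sub_nonneg.2 h2
    norm_num
    nlinarith [mul_nonneg a b, mul_nonneg (mul_nonneg a b) a, mul_nonneg (mul_nonneg a b) b,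
      mul_nonneg (mul_nonneg a b) (mul_nonneg a b), mul_nonneg (mul_nonneg a b) (mul_nonneg a a), mul_nonneg (mul_nonneg a b) (mul_nonneg b b)]

lemma fk_two_sq (x : ℂ) : fk 2 x ^ 2 = fk 1 (x ^ 2) ^ 2 / 4 := by
  rw [fk_sq, fk_sq]; simp only [pow_one]; push_cast; ring

set_option maxHeartbeats 1000000 in
/-- `f_k` with `k ≥ 4` never dominates. -/
lemma dominance {x : ℂ} (hx : ‖x‖ < 1) (h0 : x ≠ 0) :
    ∃ B : ℝ, (∀ k : ℕ, 4 ≤ k → fk k x ^ 2 ≤ B) ∧ (B < fk 1 x ^ 2 ∨ B < fk 2 x ^ 2) := by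
  obtain ⟨r, hr⟩ : ∃ r, ‖x‖ = r := ⟨_, rfl⟩
  have rpos : 0 < r := hr ▸ norm_pos_iff.2 h0
  have r1 : r < 1 := hr ▸ hx
  obtain ⟨c, hc⟩ : ∃ c, c = x.re / r := ⟨_, rfl⟩
  have hxc : x.re = r * c := by rw [hc]; field_simp
  have hab := abs_le.1 (Complex.abs_re_le_norm x)
  rw [hr, hxc] at hab
  have c1 : c ≤ 1 := by nlinarith
  have c2 : -1 ≤ c := by nlinarith
  have hW : x.re = r * ((2 + 2 * c) - 2) / 2 := by rw [hxc]; ring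
  have r42 : r ^ 4 ≤ r ^ 2 := pow_le_pow_of_le_one rpos.le r1.le (by norm_num)
  have r4 : 0 < r ^ 4 := by positivity
  -- bound for k ≥ 5
  have h5 : ∀ k : ℕ, 5 ≤ k → fk k x ^ 2 ≤ 0.0658 * r ^ 4 := by
    intro k hk
    refine (fk_sq_le (by omega) hx.le).trans ?_
    rw [hr]
    have hk' : (5 : ℝ) ≤ k := by exact_mod_cast hk
    have h1 : r ^ k ≤ r ^ 4 := pow_le_pow_of_le_one rpos.le r1.le (by omega)
    have h2 : (25 : ℝ) ≤ (k : ℝ) ^ 2 := by nlinarith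
    have h3 : r ^ 4 * 25 ≤ r ^ 4 * (k : ℝ) ^ 2 := mul_le_mul_of_nonneg_left h2 r4.le
    rw [div_le_iff₀ (by positivity)]
    linarith
  have h4 : fk 4 x ^ 2 ≤ 0.1028125 * r ^ 4 := by
    refine (fk_sq_le (by omega) hx.le).trans ?_
    rw [hr]; norm_num; linarith
  have hcrude : ∀ k : ℕ, 4 ≤ k → fk k x ^ 2 ≤ 0.1028125 * r ^ 4 := by
    intro k hk
    rcases eq_or_lt_of_le hk with h | h
    · rw [← h]; exact h4
    · refine (h5 k h).trans ?_; linarith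
  -- case analysis
  rcases le_total (-0.4) c with hc1 | hc1
  · refine ⟨_, hcrude, Or.inl ?_⟩
    rcases le_total (2 + 2 * c) 2 with h | h
    · have := low_ii hx.le h0 hr hW (by linarith) h
      linarith
    rcases le_total (2 + 2 * c) 3.4 with h' | h'
    · have := low_iii hx.le h0 hr hW (by linarith) (by linarith)
      linarith
    · have := low_iv hx.le h0 hr hW (by linarith) (by linarith)
      linarith
  have hx2 : ‖x ^ 2‖ ≤ 1 := by rw [norm_pow]; exact pow_le_one₀ (norm_nonneg _) hx.le
  have hr2 : ‖x ^ 2‖ = r ^ 2 := by rw [norm_pow, hr]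
  have hW2 : (x ^ 2).re = r ^ 2 * (4 * c ^ 2 - 2) / 2 := by
    rw [(re_pows x hr hxc).1]; ring
  have h02 : x ^ 2 ≠ 0 := pow_ne_zero _ h0
  rcases le_total c (-0.92) with hc2 | hc2
  · refine ⟨_, hcrude, Or.inr ?_⟩
    rw [fk_two_sq]
    have q1 : 0.8464 ≤ c ^ 2 := by nlinarith only [hc2]
    have q2 : c ^ 2 ≤ 1 := by nlinarith only [c1, c2]
    have := low_iv hx2 h02 hr2 hW2 (by linarith) (by linarith)
    rw [← pow_mul] at this
    norm_num at this ⊢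
    linarith
  -- middle
  have hmid : ∀ k : ℕ, 4 ≤ k → fk k x ^ 2 ≤ 0.0658 * r ^ 4 := by
    intro k hk
    rcases eq_or_lt_of_le hk with h | h
    · rw [← h, fk_sq]
      have hx4 : ‖x ^ 4‖ ≤ 1 := by rw [norm_pow]; exact pow_le_one₀ (norm_nonneg _) hx.le
      have hre : (x ^ 4).re ≤ 0 := by
        rw [(re_pows x hr hxc).2.2]
        have e : 8 * (r * c) ^ 4 - 8 * (r * c) ^ 2 * r ^ 2 + r ^ 4 =
          r ^ 4 * (8 * (c ^ 2) ^ 2 - 8 * c ^ 2 + 1) := by ring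
        rw [e]
        apply mul_nonpos_of_nonneg_of_nonpos r4.le
        have q1 : 0.16 ≤ c ^ 2 := by nlinarith only [hc1]
        have q2 : c ^ 2 ≤ 0.8464 := by nlinarith only [hc1, hc2]
        nlinarith only [q1, q2]
      have hd := dilog_re_nonpos hx4 hre
      have hn := norm_dilog_le hx4
      rw [norm_pow, hr] at hn
      norm_num at hn ⊢
      linarith
    · exact h5 k h
  refine ⟨_, hmid, ?_⟩
  rcases le_total c (-0.69) with hc3 | hc3
  · right
    rw [fk_two_sq]
    have q1 : 0.4761 ≤ c ^ 2 := by nlinarith only [hc3]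
    have q2 : c ^ 2 ≤ 0.8464 := by nlinarith only [hc2, hc3]
    have := low_iii hx2 h02 hr2 hW2 (by linarith) (by linarith)
    rw [← pow_mul] at this
    norm_num at this ⊢
    linarith
  · left
    exact low_i hx.le h0 hr hW (by linarith) (by linarith)

lemma dilog_differentiableOn : DifferentiableOn ℂ dilog (Metric.ball 0 1) := by
  have := differentiableOn_tsum_of_summable_norm (F := fun (n : ℕ) (z : ℂ) => z ^ (n + 1) / ((n : ℂ) + 1) ^ 2)
    (U := Metric.ball (0 : ℂ) 1) summable_inv_sq (fun n => by fun_prop) Metric.isOpen_ball ?_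
  · exact this
  · intro n w hw
    rw [mem_ball_zero_iff] at hw
    refine (norm_dilog_term_le hw.le n).trans ?_
    exact mul_le_of_le_one_left (by positivity) hw.le

lemma pow_mem_unit_ball {k : ℕ} (hk : k ≠ 0) {x : ℂ} (hx : x ∈ Metric.ball (0 : ℂ) 1) :
    x ^ k ∈ Metric.ball (0 : ℂ) 1 := by
  rw [mem_ball_zero_iff] at *
  rw [norm_pow]; exact pow_lt_one₀ (norm_nonneg _) hx hk

lemma dilog_pow_analytic {k : ℕ} (hk : k ≠ 0) :
    AnalyticOnNhd ℂ (fun x => dilog (x ^ k)) (Metric.ball 0 1) := by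
  apply DifferentiableOn.analyticOnNhd _ Metric.isOpen_ball
  exact dilog_differentiableOn.comp (by fun_prop) (fun x hx => pow_mem_unit_ball hk hx)

lemma dilog_zero : dilog 0 = 0 := by
  have := norm_dilog_le (x := 0) (by simp)
  simpa using this

lemma mem_slitPlane_of_fk_pos {k : ℕ} {x : ℂ} (h : 0 < fk k x) : dilog (x ^ k) ∈ slitPlane := by
  by_contra hc
  rw [Complex.mem_slitPlane_iff, not_or] at hc
  push Not at hc
  have h1 : ‖dilog (x ^ k)‖ = -(dilog (x ^ k)).re := by
    have : dilog (x ^ k) = (((dilog (x ^ k)).re : ℝ) : ℂ) := by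
      apply Complex.ext <;> simp [hc.2]
    rw [this, Complex.norm_real, Real.norm_eq_abs, abs_of_nonpos hc.1]; simp
  have h2 := fk_sq k x
  rw [h1] at h2
  simp at h2
  linarith

lemma fk_analytic {k : ℕ} (hk : k ≠ 0) {x : ℂ} (hx : ‖x‖ < 1) (h : 0 < fk k x) :
    AnalyticAt ℂ (fun x => (1 / (k : ℂ)) * dilog (x ^ k) ^ (1 / 2 : ℂ)) x := by
  have h1 := dilog_pow_analytic hk x (by simpa using hx)
  exact analyticAt_const.mul (h1.cpow analyticAt_const (mem_slitPlane_of_fk_pos h))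

lemma dilog_lower {x : ℂ} (hx : ‖x‖ ≤ 1) : 0.355 * ‖x‖ ≤ ‖dilog x‖ := by
  have h1 := norm_dilog_sub_le hx
  have h2 := norm_sub_norm_le x (x - dilog x)
  rw [sub_sub_cancel, norm_sub_rev x] at h2
  linarith

lemma no_prop {i j : ℕ} (hi : i ≠ 0) (hij : i < j) :
    ¬ ∀ x ∈ Metric.ball (0 : ℂ) 1, (1 / (i : ℂ)) ^ 2 * dilog (x ^ i) = (1 / (j : ℂ)) ^ 2 * dilog (x ^ j) := by
  intro h
  have hj : (1 : ℝ) ≤ j := by exact_mod_cast (by omega : 1 ≤ j)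
  have hi' : (1 : ℝ) ≤ i := by exact_mod_cast (by omega : 1 ≤ i)
  set ε : ℝ := 1 / (10 * (i : ℝ) ^ 2) with hε
  have e0 : 0 < ε := by positivity
  have e1 : ε < 1 := by
    rw [hε, div_lt_one (by positivity)]; nlinarith
  have hn : ‖(ε : ℂ)‖ = ε := by rw [Complex.norm_real, Real.norm_of_nonneg e0.le]
  have hx : (ε : ℂ) ∈ Metric.ball (0 : ℂ) 1 := by rw [mem_ball_zero_iff, hn]; exact e1
  have h1 := congrArg norm (h _ hx)
  have xi : ‖(ε : ℂ) ^ i‖ = ε ^ i := by rw [norm_pow, hn]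
  have xj : ‖(ε : ℂ) ^ j‖ = ε ^ j := by rw [norm_pow, hn]
  have l1 := dilog_lower (x := (ε : ℂ) ^ i) (by rw [xi]; exact pow_le_one₀ e0.le e1.le)
  have l2 := norm_dilog_le (x := (ε : ℂ) ^ j) (by rw [xj]; exact pow_le_one₀ e0.le e1.le)
  rw [xi] at l1
  rw [xj] at l2
  simp only [norm_mul, norm_pow, norm_div, norm_one, Complex.norm_natCast] at h1
  have l3 : ε ^ j ≤ ε ^ i * ε := by
    rw [← pow_succ]; exact pow_le_pow_of_le_one e0.le e1.le hij
  have ei : 0 < ε ^ i := by positivity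
  have k1 : (1 / (j : ℝ)) ^ 2 ≤ 1 := pow_le_one₀ (by positivity) (by rw [div_le_one (by linarith)]; exact hj)
  have k2 : (1 / (j : ℝ)) ^ 2 * ‖dilog ((ε : ℂ) ^ j)‖ ≤ 1.645 * (ε ^ i * ε) := by
    calc _ ≤ 1 * ‖dilog ((ε : ℂ) ^ j)‖ := mul_le_mul_of_nonneg_right k1 (norm_nonneg _)
      _ ≤ _ := by linarith
  have k3 : (1 / (i : ℝ)) ^ 2 * (0.355 * ε ^ i) ≤ (1 / (i : ℝ)) ^ 2 * ‖dilog ((ε : ℂ) ^ i)‖ :=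
    mul_le_mul_of_nonneg_left l1 (by positivity)
  have k4 : (1 / (i : ℝ)) ^ 2 = 10 * ε := by rw [hε]; field_simp
  rw [k4] at k3 h1
  nlinarith [mul_pos e0 ei]

lemma no_prop' {i j : ℕ} (hi : i ≠ 0) (hj : j ≠ 0) (hij : i ≠ j) :
    ¬ ∀ x ∈ Metric.ball (0 : ℂ) 1, (1 / (i : ℂ)) ^ 2 * dilog (x ^ i) = (1 / (j : ℂ)) ^ 2 * dilog (x ^ j) := by
  rcases lt_or_gt_of_ne hij with h | h
  · exact no_prop hi h
  · intro hc
    exact no_prop hj h (fun x hx => (hc x hx).symm)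

lemma strict {i j : ℕ} (hi : i ≠ 0) (hj : j ≠ 0) (hij : i ≠ j) {z : ℂ} (hz : ‖z‖ < 1)
    (hpos : 0 < fk i z) (hev : ∀ᶠ x in nhds z, fk j x ≤ fk i x) : fk j z < fk i z := by
  refine lt_of_le_of_ne hev.self_of_nhds fun heq => ?_
  have hposj : 0 < fk j z := heq ▸ hpos
  have ai := fk_analytic hi hz hpos
  have aj := fk_analytic hj hz hposj
  have hre (k : ℕ) (x : ℂ) : ((1 / (k : ℂ)) * dilog (x ^ k) ^ (1 / 2 : ℂ)).re = fk k x := by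
    unfold fk
    rw [show (1 / (k : ℂ)) = (((1 / (k : ℝ)) : ℝ) : ℂ) by push_cast; rfl, Complex.re_ofReal_mul]
  set g : ℂ → ℂ := fun x => (1 / (i : ℂ)) * dilog (x ^ i) ^ (1 / 2 : ℂ)
    - (1 / (j : ℂ)) * dilog (x ^ j) ^ (1 / 2 : ℂ) with hg
  have ag : AnalyticAt ℂ g z := ai.sub aj
  have hgre (x : ℂ) : (g x).re = fk i x - fk j x := by
    rw [hg]; simp only [Complex.sub_re, hre]
  rcases ag.eventually_constant_or_nhds_le_map_nhds with hconst | hopen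
  · -- constant case
    set c := g z with hc
    set A : ℂ → ℂ := fun x => (1 / (i : ℂ)) ^ 2 * dilog (x ^ i) with hA
    set B : ℂ → ℂ := fun x => (1 / (j : ℂ)) ^ 2 * dilog (x ^ j) with hB
    have aA : AnalyticOnNhd ℂ A (Metric.ball 0 1) := analyticOnNhd_const.mul (dilog_pow_analytic hi)
    have aB : AnalyticOnNhd ℂ B (Metric.ball 0 1) := analyticOnNhd_const.mul (dilog_pow_analytic hj)
    have hzb : z ∈ Metric.ball (0 : ℂ) 1 := by simpa using hz
    have hev2 : (fun x => (A x - B x - c ^ 2) ^ 2) =ᶠ[nhds z] fun x => 4 * c ^ 2 * B x := by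
      filter_upwards [hconst] with x hx
      have eA : A x = ((1 / (i : ℂ)) * dilog (x ^ i) ^ (1 / 2 : ℂ)) ^ 2 := by
        rw [mul_pow, cpow_half_sq]
      have eB : B x = ((1 / (j : ℂ)) * dilog (x ^ j) ^ (1 / 2 : ℂ)) ^ 2 := by
        rw [mul_pow, cpow_half_sq]
      rw [eA, eB]
      have : (1 / (i : ℂ)) * dilog (x ^ i) ^ (1 / 2 : ℂ) =
        (1 / (j : ℂ)) * dilog (x ^ j) ^ (1 / 2 : ℂ) + c := by rw [← hx, hg]; ring
      rw [this]; ring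
    have hall := AnalyticOnNhd.eqOn_of_preconnected_of_eventuallyEq
      (((aA.sub aB).sub analyticOnNhd_const).pow 2) (analyticOnNhd_const.mul aB)
      (convex_ball (0 : ℂ) 1).isPreconnected hzb hev2
    have h0 := hall (show (0 : ℂ) ∈ Metric.ball (0 : ℂ) 1 by simp)
    have hA0 : A 0 = 0 := by simp [hA, hi, dilog_zero]
    have hB0 : B 0 = 0 := by simp [hB, hj, dilog_zero]
    simp [hA0, hB0] at h0
    refine no_prop' hi hj hij fun x hx => ?_
    have h1 := hall hx
    simp [h0] at h1
    exact sub_eq_zero.1 h1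
  · have h1 : {w : ℂ | 0 ≤ w.re} ∈ nhds (g z) := by
      apply hopen
      rw [mem_map]
      filter_upwards [hev] with x hx
      simp only [Set.mem_preimage, Set.mem_ofPred_eq, hgre]; linarith
    obtain ⟨ε, e0, he⟩ := Metric.mem_nhds_iff.1 h1
    have h2 : g z - ((ε / 2 : ℝ) : ℂ) ∈ Metric.ball (g z) ε := by
      rw [Metric.mem_ball, dist_eq_norm, sub_sub_cancel_left, norm_neg, Complex.norm_real,
        Real.norm_of_nonneg (by positivity)]; linarith
    have h3 := he h2
    simp only [Set.mem_ofPred_eq, Complex.sub_re, hgre, Complex.ofReal_re] at h3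
    linarith

lemma dilog_im_of_real (a : ℝ) : (dilog (a : ℂ)).im = 0 := by
  have : dilog (a : ℂ) = ((∑' n : ℕ, a ^ (n + 1) / ((n : ℝ) + 1) ^ 2 : ℝ) : ℂ) := by
    unfold dilog
    rw [Complex.ofReal_tsum]
    congr 1; ext n; push_cast; rfl
  rw [this]; exact Complex.ofReal_im _

lemma not_three_real {z : ℂ} (hz : ‖z‖ < 1) (h0 : z ≠ 0) (him : z.im = 0) (h1 : fk 1 z < fk 3 z) : False := by
  obtain ⟨a, rfl⟩ : ∃ a : ℝ, z = (a : ℂ) := ⟨z.re, by apply Complex.ext <;> simp [him]⟩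
  have ha0 : a ≠ 0 := by simpa using h0
  rcases lt_or_gt_of_ne ha0 with h | h
  · -- negative
    have hy : ‖(a : ℂ) ^ 3‖ ≤ 1 := by rw [norm_pow]; exact pow_le_one₀ (norm_nonneg _) hz.le
    have e : (a : ℂ) ^ 3 = ((a ^ 3 : ℝ) : ℂ) := by push_cast; rfl
    have hre : ((a : ℂ) ^ 3).re ≤ 0 := by
      rw [e, Complex.ofReal_re]
      have := pow_pos (neg_pos.2 h) 3
      nlinarith
    have h3 := dilog_re_nonpos hy hre
    have him3 : (dilog ((a : ℂ) ^ 3)).im = 0 := by rw [e]; exact dilog_im_of_real _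
    have hs : 0 < fk 3 (a : ℂ) := lt_of_le_of_lt (fk_nonneg 1 _) h1
    have := mem_slitPlane_of_fk_pos hs
    rw [Complex.mem_slitPlane_iff] at this
    rcases this with h | h
    · linarith
    · exact h him3
  · have hn : ‖(a : ℂ)‖ = a := by rw [Complex.norm_real, Real.norm_of_nonneg h.le]
    have a1 : a < 1 := hn ▸ hz
    have h3 := fk_sq_le (k := 3) (by norm_num) hz.le
    have h2 := fk_sq 1 (a : ℂ)
    have l1 := dilog_lower hz.le
    have l2 := norm_dilog_sub_le hz.le
    have l3 := (abs_le.1 (Complex.abs_re_le_norm (dilog (a : ℂ) - a))).1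
    rw [Complex.sub_re, Complex.ofReal_re] at l3
    rw [hn] at *
    simp only [pow_one] at h2
    norm_num at h2 h3 l1 l2
    have h4 : fk 1 (a : ℂ) ^ 2 < fk 3 (a : ℂ) ^ 2 := by
      apply pow_lt_pow_left₀ h1 (fk_nonneg _ _) (by norm_num)
    have h5 : a ^ 3 ≤ a := by
      have := pow_le_pow_of_le_one h.le a1.le (show 1 ≤ 3 by norm_num)
      simpa using this
    linarith

/-- The dominating index. -/
lemma dominating {z : ℂ} (hz0 : 0 < ‖z‖) (hz1 : ‖z‖ < 1)
    (hz : z ∈ interior R1 ∨ z ∈ interior R2 ∨ z ∈ interior R3) :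
    ∃ k0 : ℕ, (k0 = 1 ∨ k0 = 2 ∨ (k0 = 3 ∧ z.im ≠ 0)) ∧ 0 < fk k0 z ∧
      ∃ δ > 0, ∀ k : ℕ, 1 ≤ k → k ≠ k0 → fk k z ^ 2 ≤ fk k0 z ^ 2 - δ := by
  have h0 : z ≠ 0 := norm_pos_iff.1 hz0
  obtain ⟨B, hB, hB'⟩ := dominance hz1 h0
  have B0 : 0 ≤ B := (sq_nonneg _).trans (hB 4 le_rfl)
  have sq (i j : ℕ) (h : fk i z < fk j z) : fk i z ^ 2 < fk j z ^ 2 :=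
    pow_lt_pow_left₀ h (fk_nonneg _ _) (by norm_num)
  have sqle (i j : ℕ) (h : fk i z ≤ fk j z) : fk i z ^ 2 ≤ fk j z ^ 2 :=
    pow_le_pow_left₀ (fk_nonneg _ _) h 2
  have posof (i : ℕ) (h : B < fk i z ^ 2) : 0 < fk i z := by
    rcases (fk_nonneg i z).eq_or_lt with h' | h'
    · rw [← h'] at h; norm_num at h; linarith
    · exact h'
  -- generic finish
  have fin (k0 i j : ℕ) (hk : ∀ k : ℕ, 1 ≤ k → k ≠ k0 → k = i ∨ k = j ∨ 4 ≤ k)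
      (hi : fk i z < fk k0 z) (hj : fk j z < fk k0 z) (hb : B < fk k0 z ^ 2) :
      ∃ δ > 0, ∀ k : ℕ, 1 ≤ k → k ≠ k0 → fk k z ^ 2 ≤ fk k0 z ^ 2 - δ := by
    have h1 := sq _ _ hi
    have h2 := sq _ _ hj
    refine ⟨min (fk k0 z ^ 2 - fk i z ^ 2) (min (fk k0 z ^ 2 - fk j z ^ 2) (fk k0 z ^ 2 - B)), ?_, ?_⟩
    · apply lt_min (by linarith) (lt_min (by linarith) (by linarith))
    · intro k hk1 hk2
      have m1 := min_le_left (fk k0 z ^ 2 - fk i z ^ 2) (min (fk k0 z ^ 2 - fk j z ^ 2) (fk k0 z ^ 2 - B))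
      have m2 := min_le_right (fk k0 z ^ 2 - fk i z ^ 2) (min (fk k0 z ^ 2 - fk j z ^ 2) (fk k0 z ^ 2 - B))
      have m3 := min_le_left (fk k0 z ^ 2 - fk j z ^ 2) (fk k0 z ^ 2 - B)
      have m4 := min_le_right (fk k0 z ^ 2 - fk j z ^ 2) (fk k0 z ^ 2 - B)
      rcases hk k hk1 hk2 with h | h | h
      · subst h; linarith
      · subst h; linarith
      · have := hB k h; linarith
  rcases hz with hz | hz | hz
  · have hev : ∀ᶠ x in nhds z, x ∈ R1 := mem_interior_iff_mem_nhds.1 hz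
    obtain ⟨-, e2, e3⟩ := hev.self_of_nhds
    have hb : B < fk 1 z ^ 2 := by
      rcases hB' with h | h
      · exact h
      · exact h.trans_le (sqle _ _ e2)
    have hp := posof _ hb
    have s2 := strict (i := 1) (j := 2) (by norm_num) (by norm_num) (by norm_num) hz1 hp (hev.mono fun x hx => hx.2.1)
    have s3 := strict (i := 1) (j := 3) (by norm_num) (by norm_num) (by norm_num) hz1 hp (hev.mono fun x hx => hx.2.2)
    exact ⟨1, Or.inl rfl, hp, fin 1 2 3 (by omega) s2 s3 hb⟩
  · have hev : ∀ᶠ x in nhds z, x ∈ R2 := mem_interior_iff_mem_nhds.1 hz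
    obtain ⟨-, e2, e3⟩ := hev.self_of_nhds
    have hb : B < fk 2 z ^ 2 := by
      rcases hB' with h | h
      · exact h.trans_le (sqle _ _ e2)
      · exact h
    have hp := posof _ hb
    have s2 := strict (i := 2) (j := 1) (by norm_num) (by norm_num) (by norm_num) hz1 hp (hev.mono fun x hx => hx.2.1)
    have s3 := strict (i := 2) (j := 3) (by norm_num) (by norm_num) (by norm_num) hz1 hp (hev.mono fun x hx => hx.2.2)
    exact ⟨2, Or.inr (Or.inl rfl), hp, fin 2 1 3 (by omega) s2 s3 hb⟩
  · have hev : ∀ᶠ x in nhds z, x ∈ R3 := mem_interior_iff_mem_nhds.1 hz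
    obtain ⟨-, e2, e3⟩ := hev.self_of_nhds
    have hb : B < fk 3 z ^ 2 := by
      rcases hB' with h | h
      · exact h.trans_le (sqle _ _ e2)
      · exact h.trans_le (sqle _ _ e3)
    have hp := posof _ hb
    have s2 := strict (i := 3) (j := 1) (by norm_num) (by norm_num) (by norm_num) hz1 hp (hev.mono fun x hx => hx.2.1)
    have s3 := strict (i := 3) (j := 2) (by norm_num) (by norm_num) (by norm_num) hz1 hp (hev.mono fun x hx => hx.2.2)
    exact ⟨3, Or.inr (Or.inr ⟨rfl, fun him => not_three_real hz1 h0 him s2⟩), hp, fin 3 1 2 (by omega) s2 s3 hb⟩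

open scoped PowerSeries.WithPiTopology in
/-- Generating function factor. -/
noncomputable def gfac (z : ℂ) (i : ℕ) : PowerSeries ℂ :=
  1 + ∑' j : ℕ, (fun _ c => z ^ c : ℕ → ℕ → ℂ) (i + 1) (j + 1) •
    (PowerSeries.X : PowerSeries ℂ) ^ ((i + 1) * (j + 1))

open scoped PowerSeries.WithPiTopology in
lemma gfac_coeff (z : ℂ) (i n : ℕ) :
    (gfac z i).coeff n = if (i + 1) ∣ n then z ^ (n / (i + 1)) else 0 := by
  unfold gfac
  have hs := Nat.Partition.summable_genFun_term (R := ℂ) (fun _ c => z ^ c) i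
  rw [map_add, hs.map_tsum _ (PowerSeries.WithPiTopology.continuous_coeff _ _)]
  simp only [map_smul, PowerSeries.coeff_X_pow, PowerSeries.coeff_one]
  rcases Nat.eq_zero_or_pos n with rfl | hn
  · have : ∀ j : ℕ, (0 : ℕ) ≠ (i + 1) * (j + 1) := fun j => by positivity
    simp
  · rw [if_neg hn.ne']
    by_cases hd : (i + 1) ∣ n
    · obtain ⟨q, rfl⟩ := hd
      have hq : q ≠ 0 := by rintro rfl; simp at hn
      obtain ⟨q, rfl⟩ := Nat.exists_eq_add_one_of_ne_zero hq
      rw [tsum_eq_single q]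
      · simp
      · intro b hb
        have : ¬ ((i + 1) * (q + 1) = (i + 1) * (b + 1)) := by
          intro h
          have := Nat.eq_of_mul_eq_mul_left (Nat.succ_pos i) h
          omega
        simp
        omega
    · rw [if_neg hd]
      have : ∀ j : ℕ, ¬ (n = (i + 1) * (j + 1)) := fun j h => hd ⟨_, h⟩
      simp [this]

/-- evaluation predicate -/
def Ev (φ : PowerSeries ℂ) (u v : ℂ) : Prop :=
  Summable (fun n => ‖φ.coeff n * u ^ n‖) ∧ HasSum (fun n => φ.coeff n * u ^ n) v

lemma Ev.mul {φ ψ : PowerSeries ℂ} {u v w : ℂ} (h1 : Ev φ u v) (h2 : Ev ψ u w) :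
    Ev (φ * ψ) u (v * w) := by
  have key : ∀ n, (φ * ψ).coeff n * u ^ n = ∑ p ∈ Finset.HasAntidiagonal.antidiagonal n,
      (φ.coeff p.1 * u ^ p.1) * (ψ.coeff p.2 * u ^ p.2) := by
    intro n
    rw [PowerSeries.coeff_mul, Finset.sum_mul]
    refine Finset.sum_congr rfl fun p hp => ?_
    rw [← Finset.HasAntidiagonal.mem_antidiagonal.1 hp, pow_add]; ring
  have hs : Summable (fun n => ‖(φ * ψ).coeff n * u ^ n‖) := by
    have := summable_norm_sum_mul_antidiagonal_of_summable_norm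
      (f := fun n => φ.coeff n * u ^ n) (g := fun n => ψ.coeff n * u ^ n) h1.1 h2.1
    exact this.congr fun n => by rw [key n]
  refine ⟨hs, ?_⟩
  have := tsum_mul_tsum_eq_tsum_sum_antidiagonal_of_summable_norm
      (f := fun n => φ.coeff n * u ^ n) (g := fun n => ψ.coeff n * u ^ n) h1.1 h2.1
  rw [h1.2.tsum_eq, h2.2.tsum_eq] at this
  rw [this, tsum_congr fun n => (key n).symm]
  exact hs.of_norm.hasSum

lemma Ev.one (u : ℂ) : Ev 1 u 1 := by
  have key : ∀ n, (1 : PowerSeries ℂ).coeff n * u ^ n = if n = 0 then 1 else 0 := by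
    intro n
    rw [PowerSeries.coeff_one]
    split_ifs with h <;> simp [h]
  refine ⟨?_, ?_⟩
  · simp_rw [key]
    refine (hasSum_ite_eq 0 (1:ℝ)).summable.congr fun n => ?_
    split_ifs <;> simp
  · simp_rw [key]
    exact hasSum_ite_eq 0 (1:ℂ)

lemma Ev.prod {s : Finset ℕ} {φ : ℕ → PowerSeries ℂ} {u : ℂ} {v : ℕ → ℂ}
    (h : ∀ i ∈ s, Ev (φ i) u (v i)) : Ev (∏ i ∈ s, φ i) u (∏ i ∈ s, v i) := by
  induction s using Finset.cons_induction with
  | empty => simpa using Ev.one u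
  | cons a s ha ih =>
    rw [Finset.prod_cons, Finset.prod_cons]
    exact (h a (by simp)).mul (ih fun i hi => h i (by simp [hi]))

lemma norm_mul_pow_lt {z u : ℂ} (hz : ‖z‖ < 1) (hu : ‖u‖ < 1) (i : ℕ) : ‖z * u ^ i‖ < 1 := by
  rw [norm_mul, norm_pow]
  have := pow_le_one₀ (n := i) (norm_nonneg u) hu.le
  nlinarith [norm_nonneg z, norm_nonneg u]

lemma gfac_ev {z u : ℂ} (hz : ‖z‖ < 1) (hu : ‖u‖ < 1) (i : ℕ) :
    Ev (gfac z i) u (1 - z * u ^ (i + 1))⁻¹ := by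
  have hx := norm_mul_pow_lt hz hu (i + 1)
  have hinj : Function.Injective (fun j : ℕ => (i + 1) * j) := fun a b h =>
    Nat.eq_of_mul_eq_mul_left (Nat.succ_pos i) h
  have h0 : ∀ n ∉ Set.range (fun j : ℕ => (i + 1) * j), (gfac z i).coeff n * u ^ n = 0 := by
    intro n hn
    rw [gfac_coeff, if_neg, zero_mul]
    rintro ⟨q, rfl⟩
    exact hn ⟨q, rfl⟩
  have hc : ∀ j : ℕ, (gfac z i).coeff ((i + 1) * j) * u ^ ((i + 1) * j) =
      (z * u ^ (i + 1)) ^ j := by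
    intro j
    rw [gfac_coeff, if_pos (Dvd.intro _ rfl), Nat.mul_div_cancel_left _ (Nat.succ_pos i),
      mul_pow, pow_mul]
  constructor
  · rw [← hinj.summable_iff (fun n hn => by rw [h0 n hn, norm_zero])]
    simp only [Function.comp_def, hc, norm_pow]
    exact summable_geometric_of_lt_one (norm_nonneg _) hx
  · rw [← hinj.hasSum_iff h0]
    simp only [Function.comp_def, hc]
    exact hasSum_geometric_of_norm_lt_one hx

open scoped PowerSeries.WithPiTopology in
lemma gfac_prod_coeff (z : ℂ) (n : ℕ) :
    Tendsto (fun N : ℕ => (∏ i ∈ Finset.range N, gfac z i).coeff n) atTop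
      (nhds (∑ p : n.Partition, z ^ p.parts.card)) := by
  have h := (Nat.Partition.hasProd_genFun (R := ℂ) (fun _ c => z ^ c)).tendsto_prod_nat
  have h2 := (PowerSeries.WithPiTopology.tendsto_iff_coeff_tendsto _ _ _ _).1 h n
  rw [Nat.Partition.coeff_genFun] at h2
  have : ∀ p : n.Partition, p.parts.toFinsupp.prod (fun _ c => z ^ c) = z ^ p.parts.card := by
    intro p
    rw [Finsupp.prod, Finset.prod_pow_eq_pow_sum]
    congr 1
    simp
  simp_rw [this] at h2
  exact h2

lemma sum_partition_eq_F (z : ℂ) {n : ℕ} (hn : 1 ≤ n) :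
    ∑ p : n.Partition, z ^ p.parts.card = F n z := by
  unfold F partsCount
  have hm : ∀ p ∈ (Finset.univ : Finset n.Partition), p.parts.card ∈ Finset.Icc 1 n := by
    intro p _
    rw [Finset.mem_Icc]
    constructor
    · rw [Nat.one_le_iff_ne_zero, ne_eq, Multiset.card_eq_zero]
      intro h
      have := p.parts_sum
      rw [h] at this
      simp at this; omega
    · have h1 : p.parts.card • 1 ≤ p.parts.sum := Multiset.card_nsmul_le_sum fun x hx =>
        p.parts_pos hx
      rw [p.parts_sum] at h1
      simpa using h1
  rw [← Finset.sum_fiberwise_of_maps_to hm]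
  refine Finset.sum_congr rfl fun k _ => ?_
  rw [Finset.sum_congr rfl (g := fun _ => z ^ k)
    (fun p hp => by rw [(Finset.mem_filter.1 hp).2])]
  rw [Finset.sum_const, nsmul_eq_mul, Nat.card_eq_fintype_card, Fintype.card_subtype]

/-- partial geometric sums -/
noncomputable def TT (N : ℕ) (v : ℂ) : ℂ := ∑ m ∈ Finset.range N, v ^ (m + 1)

lemma TT_tendsto {v : ℂ} (hv : ‖v‖ < 1) :
    Tendsto (fun N => TT N v) atTop (nhds (v / (1 - v))) := by
  have h := (hasSum_geometric_of_norm_lt_one hv).mul_left v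
  have h2 := h.tendsto_sum_nat
  rw [div_eq_mul_inv]
  refine h2.congr fun N => ?_
  unfold TT
  refine Finset.sum_congr rfl fun m _ => ?_
  rw [pow_succ']

lemma TT_norm_le {v : ℂ} (hv : ‖v‖ < 1) (N : ℕ) : ‖TT N v‖ ≤ (1 - ‖v‖)⁻¹ := by
  have h := hasSum_geometric_of_lt_one (norm_nonneg v) hv
  refine (norm_sum_le _ _).trans ?_
  refine le_trans ?_ (sum_le_hasSum (Finset.range N) (fun _ _ => by positivity) h)
  refine Finset.sum_le_sum fun m _ => ?_
  rw [norm_pow]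
  exact pow_le_pow_of_le_one (norm_nonneg v) hv.le (Nat.le_succ m)

lemma norm_pow_div_le (z : ℂ) (j : ℕ) : ‖z ^ j / (j : ℂ)‖ ≤ ‖z‖ ^ j := by
  rcases Nat.eq_zero_or_pos j with rfl | hj
  · simp
  · rw [norm_div, norm_pow, Complex.norm_natCast]
    exact div_le_self (by positivity) (by exact_mod_cast hj)

/-- The log of the generating function. -/
noncomputable def SS (z u : ℂ) : ℂ := ∑' j : ℕ, z ^ j / (j : ℂ) * (u ^ j / (1 - u ^ j))

lemma norm_term_le {z u : ℂ} (hu : ‖u‖ < 1) (N j : ℕ) :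
    ‖z ^ j / (j : ℂ) * TT N (u ^ j)‖ ≤ ‖z‖ ^ j * (1 - ‖u‖)⁻¹ := by
  rcases Nat.eq_zero_or_pos j with rfl | hj
  · have : 0 ≤ (1 - ‖u‖)⁻¹ := inv_nonneg.2 (by linarith)
    simpa using this
  · rw [norm_mul]
    have h1 : ‖u ^ j‖ ≤ ‖u‖ := by
      rw [norm_pow]; exact pow_le_of_le_one (norm_nonneg u) hu.le hj.ne'
    refine mul_le_mul (norm_pow_div_le z j) ((TT_norm_le (h1.trans_lt hu) N).trans ?_)
      (norm_nonneg _) (by positivity)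
    exact inv_anti₀ (by linarith) (by linarith)

lemma summable_bd {z u : ℂ} (hz : ‖z‖ < 1) : Summable (fun j : ℕ => ‖z‖ ^ j * (1 - ‖u‖)⁻¹) :=
  (summable_geometric_of_lt_one (norm_nonneg z) hz).mul_right _

lemma SS_tendsto {z u : ℂ} (hz : ‖z‖ < 1) (hu : ‖u‖ < 1) :
    Tendsto (fun N => ∑' j : ℕ, z ^ j / (j : ℂ) * TT N (u ^ j)) atTop (nhds (SS z u)) := by
  refine tendsto_tsum_of_dominated_convergence (summable_bd (u := u) hz) ?_ ?_
  · intro j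
    rcases Nat.eq_zero_or_pos j with rfl | hj
    · simp
    · refine (TT_tendsto ?_).const_mul _
      rw [norm_pow]
      exact pow_lt_one₀ (norm_nonneg u) hu hj.ne'
  · exact Eventually.of_forall fun N j => norm_term_le hu N j

lemma prod_eq_exp {z u : ℂ} (hz : ‖z‖ < 1) (hu : ‖u‖ < 1) (N : ℕ) :
    ∏ i ∈ Finset.range N, (1 - z * u ^ (i + 1))⁻¹ =
      Complex.exp (∑' j : ℕ, z ^ j / (j : ℂ) * TT N (u ^ j)) := by
  have hs : HasSum (fun j : ℕ => z ^ j / (j : ℂ) * TT N (u ^ j))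
      (∑ i ∈ Finset.range N, -Complex.log (1 - z * u ^ (i + 1))) := by
    have h : ∀ i ∈ Finset.range N, HasSum (fun j : ℕ => (z * u ^ (i + 1)) ^ j / (j : ℂ))
        (-Complex.log (1 - z * u ^ (i + 1))) := fun i _ =>
      Complex.hasSum_taylorSeries_neg_log (norm_mul_pow_lt hz hu (i + 1))
    refine (hasSum_sum h).congr_fun fun j => ?_
    unfold TT
    rw [Finset.mul_sum]
    refine Finset.sum_congr rfl fun i _ => ?_
    rw [mul_pow, ← pow_mul, ← pow_mul, mul_comm j (i + 1)]; ring
  rw [hs.tsum_eq, Complex.exp_sum]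
  refine Finset.prod_congr rfl fun i _ => ?_
  rw [Complex.exp_neg, Complex.exp_log]
  intro h0
  have := norm_mul_pow_lt hz hu (i + 1)
  rw [← sub_eq_zero.1 h0] at this
  simp at this

lemma norm_gprod_le {z u : ℂ} (hz : ‖z‖ < 1) (hu : ‖u‖ < 1) (N : ℕ) :
    ‖∏ i ∈ Finset.range N, (1 - z * u ^ (i + 1))⁻¹‖ ≤
      Real.exp (∑' j : ℕ, ‖z‖ ^ j * (1 - ‖u‖)⁻¹) := by
  rw [prod_eq_exp hz hu, Complex.norm_exp]
  refine Real.exp_le_exp.2 ((Complex.re_le_norm _).trans ?_)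
  exact tsum_of_norm_bounded (summable_bd (u := u) hz).hasSum (norm_term_le hu N)

lemma prod_tendsto {z u : ℂ} (hz : ‖z‖ < 1) (hu : ‖u‖ < 1) :
    Tendsto (fun N => ∏ i ∈ Finset.range N, (1 - z * u ^ (i + 1))⁻¹) atTop
      (nhds (Complex.exp (SS z u))) := by
  simp_rw [prod_eq_exp hz hu]
  exact (Complex.continuous_exp.tendsto _).comp (SS_tendsto hz hu)

lemma norm_exp_neg_w (σ y : ℝ) : ‖Complex.exp (-(σ + y * I))‖ = Real.exp (-σ) := by
  rw [Complex.norm_exp]; simp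

lemma norm_exp_neg_w_lt {σ : ℝ} (hσ : 0 < σ) (y : ℝ) : ‖Complex.exp (-(σ + y * I))‖ < 1 := by
  rw [norm_exp_neg_w]; exact Real.exp_lt_one_iff.2 (by linarith)

lemma integral_exp_int (k : ℤ) (hk : k ≠ 0) :
    ∫ y in (-(Real.pi / 2))..(3 * Real.pi / 2), Complex.exp (k * I * y) = 0 := by
  rw [integral_exp_mul_complex (by simp [hk])]
  have : (k : ℂ) * I * ((3 * Real.pi / 2 : ℝ) : ℂ) =
      k * I * ((-(Real.pi / 2) : ℝ) : ℂ) + k * (2 * Real.pi * I) := by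
    push_cast; ring
  rw [this, Complex.exp_add, Complex.exp_int_mul_two_pi_mul_I]
  simp

lemma cauchy_ev {φ : PowerSeries ℂ} {g : ℝ → ℂ} {σ : ℝ}
    (h : ∀ y : ℝ, Ev φ (Complex.exp (-(σ + y * I))) (g y)) (n : ℕ) :
    ∫ y in (-(Real.pi / 2))..(3 * Real.pi / 2), g y * Complex.exp (n * (σ + y * I)) =
      2 * Real.pi * φ.coeff n := by
  set E : ℝ → ℂ := fun y => Complex.exp (-(σ + y * I))
  have hE : ∀ y, ‖E y‖ = Real.exp (-σ) := norm_exp_neg_w σ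
  have hb : Summable (fun m => ‖φ.coeff m‖ * Real.exp (-σ) ^ m * Real.exp (n * σ)) := by
    have := (h 0).1
    refine (this.congr fun m => ?_).mul_right _
    rw [norm_mul, norm_pow]
    rw [← hE 0]
  have hsum := intervalIntegral.hasSum_integral_of_dominated_convergence
    (μ := MeasureTheory.volume) (a := -(Real.pi / 2)) (b := 3 * Real.pi / 2)
    (F := fun m y => φ.coeff m * E y ^ m * Complex.exp (n * (σ + y * I)))
    (f := fun y => g y * Complex.exp (n * (σ + y * I)))
    (fun m _ => ‖φ.coeff m‖ * Real.exp (-σ) ^ m * Real.exp (n * σ))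
    (fun m => by
      refine Continuous.aestronglyMeasurable ?_
      fun_prop)
    (fun m => Eventually.of_forall fun y _ => by
      rw [norm_mul, norm_mul, norm_pow, hE, Complex.norm_exp]
      simp)
    (Eventually.of_forall fun y _ => hb) 
    (by simp)
    (Eventually.of_forall fun y _ => (h y).2.mul_right _)
  have hterm : ∀ m : ℕ, (∫ y in (-(Real.pi / 2))..(3 * Real.pi / 2),
      φ.coeff m * E y ^ m * Complex.exp (n * (σ + y * I))) =
      if m = n then 2 * Real.pi * φ.coeff n else 0 := by
    intro m
    have h1 : ∀ y : ℝ, φ.coeff m * E y ^ m * Complex.exp (n * (σ + y * I)) =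
        φ.coeff m * Complex.exp (((n : ℂ) - m) * σ) *
          Complex.exp (((n - m : ℤ) : ℂ) * I * y) := by
      intro y
      simp only [E]
      rw [← Complex.exp_nat_mul, mul_assoc, mul_assoc, ← Complex.exp_add, ← Complex.exp_add]
      congr 2
      push_cast; ring
    simp_rw [h1]
    rw [intervalIntegral.integral_const_mul]
    by_cases hmn : m = n
    · subst hmn
      simp
      ring
    · rw [integral_exp_int _ (by omega), if_neg hmn, mul_zero]
  simp_rw [hterm] at hsum
  exact hsum.unique (hasSum_ite_eq n _)

lemma cauchy_F {z : ℂ} (hz : ‖z‖ < 1) {n : ℕ} (hn : 1 ≤ n) {σ : ℝ} (hσ : 0 < σ) :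
    ∫ y in (-(Real.pi / 2))..(3 * Real.pi / 2),
      Complex.exp (SS z (Complex.exp (-(σ + y * I)))) * Complex.exp (n * (σ + y * I)) =
      2 * Real.pi * F n z := by
  have hu := norm_exp_neg_w_lt hσ
  have h1 : ∀ N : ℕ, (∫ y in (-(Real.pi / 2))..(3 * Real.pi / 2),
      (∏ i ∈ Finset.range N, (1 - z * Complex.exp (-(σ + y * I)) ^ (i + 1))⁻¹) *
        Complex.exp (n * (σ + y * I))) =
      2 * Real.pi * (∏ i ∈ Finset.range N, gfac z i).coeff n := fun N =>
    cauchy_ev (fun y => Ev.prod fun i _ => gfac_ev hz (hu y) i) n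
  have h2 := (gfac_prod_coeff z n).const_mul (2 * Real.pi : ℂ)
  rw [sum_partition_eq_F z hn] at h2
  simp_rw [← h1] at h2
  refine tendsto_nhds_unique ?_ h2
  refine intervalIntegral.tendsto_integral_filter_of_dominated_convergence
    (fun _ => Real.exp (∑' j : ℕ, ‖z‖ ^ j * (1 - Real.exp (-σ))⁻¹) * Real.exp (n * σ))
    ?_ ?_ (by simp) ?_
  · refine Eventually.of_forall fun N => Continuous.aestronglyMeasurable ?_
    refine Continuous.mul (continuous_finsetProd _ fun i _ => Continuous.inv₀ (by fun_prop) ?_)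
      (by fun_prop)
    intro y h0
    have := norm_mul_pow_lt hz (hu y) (i + 1)
    rw [← sub_eq_zero.1 h0] at this
    simp at this
  · refine Eventually.of_forall fun N => Eventually.of_forall fun y _ => ?_
    rw [norm_mul]
    refine mul_le_mul ?_ (le_of_eq ?_) (norm_nonneg _) (Real.exp_nonneg _)
    · have := norm_gprod_le hz (hu y) N
      rwa [norm_exp_neg_w] at this
    · rw [Complex.norm_exp]; simp
  · exact Eventually.of_forall fun y _ => (prod_tendsto hz (hu y)).mul_const _

/-- A cone in the right half plane. -/
def cone (C : ℝ) : Set ℂ := {w | 0 < w.re ∧ |w.im| ≤ C * w.re}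

/-- Regularised kernel. -/
noncomputable def ph (η s : ℂ) : ℂ :=
  η * Complex.exp (-s) / (1 - η * Complex.exp (-s)) - if η = 1 then 1 / s else 0

/-- Value of the kernel at zero. -/
noncomputable def ph0 (η : ℂ) : ℂ := if η = 1 then -1 / 2 else η / (1 - η)

lemma cone_norm_le {C : ℝ} {s : ℂ} (hs : s ∈ cone C) : ‖s‖ ≤ (1 + C) * s.re := by
  obtain ⟨h1, h2⟩ := hs
  have := Complex.norm_le_abs_re_add_abs_im s
  rw [abs_of_pos h1] at this
  linarith

lemma cone_C_nonneg {C : ℝ} {s : ℂ} (hs : s ∈ cone C) : 0 ≤ C := by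
  obtain ⟨h1, h2⟩ := hs
  by_contra h
  push Not at h
  have := abs_nonneg s.im
  nlinarith

lemma cone_mul {C : ℝ} {s : ℂ} (hs : s ∈ cone C) {j : ℕ} (hj : 0 < j) : (j : ℂ) * s ∈ cone C := by
  obtain ⟨h1, h2⟩ := hs
  have hj' : (0 : ℝ) < j := by exact_mod_cast hj
  refine ⟨by simpa using mul_pos hj' h1, ?_⟩
  simp [abs_mul]
  nlinarith

lemma ph_eq {η s : ℂ} : η * Complex.exp (-s) / (1 - η * Complex.exp (-s)) =
    η / (Complex.exp s - η) := by
  have h := Complex.exp_ne_zero s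
  rw [Complex.exp_neg]
  have : (1 - η * (Complex.exp s)⁻¹) = (Complex.exp s - η) * (Complex.exp s)⁻¹ := by
    field_simp
  rw [this, mul_div_mul_right _ _ (inv_ne_zero h)]

lemma norm_exp_sub_ge {η s : ℂ} (hη : ‖η‖ = 1) : s.re ≤ ‖Complex.exp s - η‖ := by
  have h1 := norm_sub_norm_le (Complex.exp s) η
  rw [Complex.norm_exp, hη] at h1
  have := Real.add_one_le_exp s.re
  linarith

lemma ph_one_bound {C : ℝ} {s : ℂ} (hs : s ∈ cone C) : ‖ph 1 s‖ ≤ 2 + C := by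
  have hC := cone_C_nonneg hs
  have hn := cone_norm_le hs
  have hre := hs.1
  have hs0 : s ≠ 0 := by rintro rfl; simp at hre
  have hge := norm_exp_sub_ge (η := 1) (s := s) (by simp)
  have hpos : 0 < ‖Complex.exp s - 1‖ := hre.trans_le hge
  have hne : Complex.exp s - 1 ≠ 0 := norm_pos_iff.1 hpos
  have hsn : 0 < ‖s‖ := norm_pos_iff.2 hs0
  unfold ph
  rw [ph_eq, if_pos rfl]
  rcases le_total ‖s‖ 1 with h | h
  · have e : 1 / (Complex.exp s - 1) - 1 / s =
        -(Complex.exp s - 1 - s) / (s * (Complex.exp s - 1)) := by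
      field_simp; ring
    rw [e, norm_div, norm_neg, norm_mul, div_le_iff₀ (by positivity)]
    have := Complex.norm_exp_sub_one_sub_id_le h
    have h3 : ‖s‖ * ‖s‖ ≤ ‖s‖ * ((1 + C) * ‖Complex.exp s - 1‖) := by
      refine mul_le_mul_of_nonneg_left (hn.trans ?_) hsn.le
      exact mul_le_mul_of_nonneg_left hge (by linarith)
    have h4 : 0 ≤ ‖s‖ * ‖Complex.exp s - 1‖ := by positivity
    nlinarith
  · refine (norm_sub_le _ _).trans ?_
    have h1 : ‖1 / s‖ ≤ 1 := by
      rw [norm_div, norm_one, div_le_one hsn]; exact h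
    have h2 : ‖1 / (Complex.exp s - 1)‖ ≤ 1 + C := by
      rw [norm_div, norm_one, div_le_iff₀ hpos]
      calc (1 : ℝ) ≤ (1 + C) * s.re := h.trans hn
        _ ≤ _ := mul_le_mul_of_nonneg_left hge (by linarith)
    linarith

lemma ph_ne_bound {C : ℝ} {η s : ℂ} (hη : ‖η‖ = 1) (h1 : η ≠ 1) (hs : s ∈ cone C) :
    ‖ph η s‖ ≤ 4 * (1 + C) / ‖1 - η‖ := by
  have hC := cone_C_nonneg hs
  have hn := cone_norm_le hs
  have hre := hs.1
  have hge := norm_exp_sub_ge (s := s) hη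
  have hpos : 0 < ‖Complex.exp s - η‖ := hre.trans_le hge
  have hd : 0 < ‖1 - η‖ := norm_pos_iff.2 (sub_ne_zero.2 h1.symm)
  have hd2 : ‖1 - η‖ ≤ 2 := by
    refine (norm_sub_le _ _).trans ?_
    rw [hη, norm_one]; norm_num
  unfold ph
  rw [ph_eq, if_neg h1, sub_zero, norm_div, hη, div_le_div_iff₀ hpos hd]
  rcases le_total ‖s‖ (‖1 - η‖ / 4) with h | h
  · have h3 := Complex.norm_exp_sub_one_le (x := s) (by linarith)
    have h4 : ‖1 - η‖ ≤ ‖Complex.exp s - η‖ + ‖Complex.exp s - 1‖ := by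
      have : 1 - η = (Complex.exp s - η) - (Complex.exp s - 1) := by ring
      rw [this]; exact norm_sub_le _ _
    nlinarith
  · nlinarith

lemma ph_bound {C : ℝ} {ζ : ℂ} {k : ℕ} (hk : 0 < k) (hζ : ζ ^ k = 1) (hC : 0 ≤ C) :
    ∃ K : ℝ, 0 ≤ K ∧ ∀ j : ℕ, ∀ s ∈ cone C, ‖ph (ζ ^ j) s‖ ≤ K := by
  have hn : ‖ζ‖ = 1 := norm_eq_one_of_pow_eq_one hζ hk.ne'
  set B : ℕ → ℝ := fun i => (2 + C) + 4 * (1 + C) / ‖1 - ζ ^ i‖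
  have hB : ∀ i, 0 ≤ B i := fun i => by simp only [B]; positivity
  refine ⟨∑ i ∈ Finset.range k, B i, Finset.sum_nonneg fun i _ => hB i, fun j s hs => ?_⟩
  have hj : ζ ^ j = ζ ^ (j % k) := by
    conv_lhs => rw [← Nat.div_add_mod j k, pow_add, pow_mul, hζ, one_pow, one_mul]
  rw [hj]
  refine le_trans ?_ (Finset.single_le_sum (fun i _ => hB i)
    (Finset.mem_range.2 (Nat.mod_lt j hk)))
  by_cases h1 : ζ ^ (j % k) = 1
  · simp only [B]
    rw [h1]
    have := ph_one_bound hs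
    simpa using this
  · have := ph_ne_bound (by rw [norm_pow, hn, one_pow]) h1 hs
    simp only [B]
    linarith

lemma exp_quot_tendsto : Tendsto (fun s : ℂ => (Complex.exp s - 1) / s) (nhdsWithin 0 {0}ᶜ)
    (nhds 1) := by
  have := (Complex.hasDerivAt_exp 0).tendsto_slope
  simp only [Complex.exp_zero] at this
  refine this.congr fun s => ?_
  rw [slope_def_field]; simp

lemma exp_quot2_tendsto : Tendsto (fun s : ℂ => (Complex.exp s - 1 - s) / s ^ 2)
    (nhdsWithin 0 {0}ᶜ) (nhds (1 / 2)) := by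
  rw [tendsto_iff_norm_sub_tendsto_zero]
  have hs : Tendsto (fun s : ℂ => ‖s‖) (nhdsWithin 0 {0}ᶜ) (nhds 0) := by
    have : Tendsto (fun s : ℂ => ‖s‖) (nhds 0) (nhds ‖(0 : ℂ)‖) := continuous_norm.tendsto _
    rw [norm_zero] at this
    exact this.mono_left nhdsWithin_le_nhds
  refine squeeze_zero' (Eventually.of_forall fun _ => norm_nonneg _) ?_ hs
  have h1 : ∀ᶠ s : ℂ in nhdsWithin 0 {0}ᶜ, ‖s‖ < 1 := hs.eventually (gt_mem_nhds one_pos)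
  filter_upwards [h1, self_mem_nhdsWithin] with s hs1 hs0
  have hs0' : s ≠ 0 := hs0
  have hb := Complex.exp_bound (x := s) hs1.le (n := 3) (by norm_num)
  have e : (Complex.exp s - 1 - s) / s ^ 2 - 1 / 2 =
      (Complex.exp s - ∑ m ∈ Finset.range 3, s ^ m / (m.factorial : ℂ)) / s ^ 2 := by
    simp [Finset.sum_range_succ]
    field_simp
    ring
  rw [e, norm_div, norm_pow, div_le_iff₀ (by positivity)]
  refine hb.trans ?_
  have : (0 : ℝ) ≤ ‖s‖ ^ 3 := by positivity
  norm_num [Nat.factorial]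
  nlinarith

lemma cone_le (C : ℝ) : nhdsWithin (0 : ℂ) (cone C) ≤ nhdsWithin 0 {0}ᶜ := by
  refine nhdsWithin_mono _ fun s hs => ?_
  rintro rfl
  have := hs.1
  simp at this

lemma ph_tendsto {η : ℂ} (C : ℝ) : Tendsto (ph η) (nhdsWithin 0 (cone C)) (nhds (ph0 η)) := by
  by_cases h1 : η = 1
  · subst h1
    refine Tendsto.mono_left ?_ (cone_le C)
    unfold ph0
    rw [if_pos rfl]
    have h := (exp_quot2_tendsto.div exp_quot_tendsto one_ne_zero).neg
    have e : -((1 : ℂ) / 2 / 1) = -1 / 2 := by norm_num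
    rw [e] at h
    refine h.congr' ?_
    have hball : ∀ᶠ s : ℂ in nhdsWithin 0 {0}ᶜ, (Complex.exp s - 1) / s ≠ 0 :=
      exp_quot_tendsto.eventually_ne one_ne_zero
    filter_upwards [hball, self_mem_nhdsWithin] with s hs hs0
    have hs0' : s ≠ 0 := hs0
    have hne : Complex.exp s - 1 ≠ 0 := by
      intro h0; rw [h0] at hs; simp at hs
    unfold ph
    rw [ph_eq, if_pos rfl]
    simp only [Pi.div_apply]
    field_simp
    ring
  · refine Tendsto.mono_left ?_ nhdsWithin_le_nhds
    have hc : ContinuousAt (ph η) 0 := by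
      unfold ph
      simp only [if_neg h1, sub_zero]
      refine ContinuousAt.div (by fun_prop) (by fun_prop) ?_
      simp [sub_ne_zero, Ne.symm h1]
    have := hc.tendsto
    convert this using 2
    simp [ph, ph0, h1]

/-- The regular part of the log generating function near a root of unity. -/
noncomputable def AA (z ζ w : ℂ) : ℂ := ∑' j : ℕ, z ^ j / (j : ℂ) * ph (ζ ^ j) (j * w)

/-- Its value at zero. -/
noncomputable def A0 (z ζ : ℂ) : ℂ := ∑' j : ℕ, z ^ j / (j : ℂ) * ph0 (ζ ^ j)

lemma AA_term_le {z ζ w : ℂ} {C K : ℝ} (hK0 : 0 ≤ K)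
    (hK : ∀ j : ℕ, ∀ s ∈ cone C, ‖ph (ζ ^ j) s‖ ≤ K) (hw : w ∈ cone C) (j : ℕ) :
    ‖z ^ j / (j : ℂ) * ph (ζ ^ j) (j * w)‖ ≤ ‖z‖ ^ j * K := by
  rcases Nat.eq_zero_or_pos j with rfl | hj
  · simpa using hK0
  · rw [norm_mul]
    exact mul_le_mul (norm_pow_div_le z j) (hK j _ (cone_mul hw hj)) (norm_nonneg _) (by positivity)

lemma summable_pow_mul {z : ℂ} (hz : ‖z‖ < 1) (K : ℝ) : Summable fun j : ℕ => ‖z‖ ^ j * K :=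
  (summable_geometric_of_lt_one (norm_nonneg z) hz).mul_right _

lemma AA_bound {z ζ : ℂ} {C : ℝ} {k : ℕ} (hz : ‖z‖ < 1) (hk : 0 < k) (hζ : ζ ^ k = 1)
    (hC : 0 ≤ C) : ∃ K : ℝ, 0 ≤ K ∧ ∀ w ∈ cone C, ‖AA z ζ w‖ ≤ K := by
  obtain ⟨K, hK0, hK⟩ := ph_bound hk hζ hC
  refine ⟨∑' j : ℕ, ‖z‖ ^ j * K, tsum_nonneg fun j => by positivity, fun w hw => ?_⟩
  exact tsum_of_norm_bounded (summable_pow_mul hz K).hasSum (AA_term_le hK0 hK hw)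

lemma AA_tendsto {z ζ : ℂ} {C : ℝ} {k : ℕ} (hz : ‖z‖ < 1) (hk : 0 < k) (hζ : ζ ^ k = 1)
    (hC : 0 ≤ C) : Tendsto (AA z ζ) (nhdsWithin 0 (cone C)) (nhds (A0 z ζ)) := by
  obtain ⟨K, hK0, hK⟩ := ph_bound hk hζ hC
  refine tendsto_tsum_of_dominated_convergence (summable_pow_mul hz K) ?_ ?_
  · intro j
    rcases Nat.eq_zero_or_pos j with rfl | hj
    · simpa using tendsto_const_nhds
    · refine Tendsto.const_mul _ ((ph_tendsto C).comp ?_)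
      refine tendsto_nhdsWithin_iff.2 ⟨?_, ?_⟩
      · have : Tendsto (fun w : ℂ => (j : ℂ) * w) (nhds 0) (nhds ((j : ℂ) * 0)) :=
          (continuous_const.mul continuous_id).tendsto _
        rw [mul_zero] at this
        exact this.mono_left nhdsWithin_le_nhds
      · filter_upwards [self_mem_nhdsWithin] with w hw using cone_mul hw hj
  · filter_upwards [self_mem_nhdsWithin] with w hw j using AA_term_le hK0 hK hw j

lemma hasSum_dilog_dvd {z : ℂ} (hz : ‖z‖ < 1) {k : ℕ} (hk : 0 < k) :
    HasSum (fun j : ℕ => if k ∣ j then z ^ j / (j : ℂ) ^ 2 else 0)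
      (dilog (z ^ k) / (k : ℂ) ^ 2) := by
  have hinj : Function.Injective (fun n : ℕ => k * (n + 1)) := fun a b h => by
    have := Nat.eq_of_mul_eq_mul_left hk h
    omega
  rw [← hinj.hasSum_iff]
  · have h := (hasSum_dilog (x := z ^ k)
      (by rw [norm_pow]; exact pow_le_one₀ (norm_nonneg z) hz.le)).div_const ((k : ℂ) ^ 2)
    refine h.congr_fun fun n => ?_
    simp only [Function.comp_def, if_pos (Dvd.intro _ rfl)]
    rw [pow_mul]
    push_cast
    rw [mul_pow, div_div]
    ring
  · intro j hj
    split_ifs with hd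
    · obtain ⟨q, rfl⟩ := hd
      rcases q with _ | q
      · simp
      · exact absurd ⟨q, rfl⟩ hj
    · rfl

lemma SS_decomp {z ζ w : ℂ} {k : ℕ} (hz : ‖z‖ < 1) (hk : 0 < k) (hζ : IsPrimitiveRoot ζ k)
    (hw : 0 < w.re) :
    SS z (ζ * Complex.exp (-w)) = dilog (z ^ k) / ((k : ℂ) ^ 2 * w) + AA z ζ w := by
  have hw0 : w ≠ 0 := by rintro rfl; simp at hw
  have hwc : w ∈ cone (|w.im| / w.re) := ⟨hw, by field_simp; exact le_rfl⟩
  obtain ⟨K, hK0, hK⟩ := ph_bound (C := |w.im| / w.re) hk hζ.pow_eq_one (by positivity)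
  have hA : HasSum (fun j : ℕ => z ^ j / (j : ℂ) * ph (ζ ^ j) (j * w)) (AA z ζ w) :=
    (Summable.of_norm_bounded (summable_pow_mul hz K) (AA_term_le hK0 hK hwc)).hasSum
  have hD := (hasSum_dilog_dvd hz hk).div_const w
  have := hD.add hA
  rw [div_div] at this
  refine (this.congr_fun fun j => ?_).tsum_eq
  unfold ph
  have e1 : (ζ * Complex.exp (-w)) ^ j = ζ ^ j * Complex.exp (-(j * w)) := by
    rw [mul_pow, ← Complex.exp_nat_mul]; congr 2; ring
  rw [e1]
  by_cases hd : k ∣ j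
  · have h1 := (hζ.pow_eq_one_iff_dvd j).2 hd
    rw [h1, if_pos hd, if_pos rfl]
    rcases Nat.eq_zero_or_pos j with rfl | hj
    · simp
    · have : (j : ℂ) ≠ 0 := by exact_mod_cast hj.ne'
      field_simp
      ring
  · have h1 : ζ ^ j ≠ 1 := fun h => hd ((hζ.pow_eq_one_iff_dvd j).1 h)
    rw [if_neg hd, if_neg h1]
    simp

lemma re_div_le (L w : ℂ) (hw : 0 < w.re) : (L / w).re ≤ (‖L‖ + L.re) / (2 * w.re) := by
  have hn : 0 < Complex.normSq w := by
    rw [Complex.normSq_pos]; rintro rfl; simp at hw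
  have hl : ‖L‖ ^ 2 = L.re ^ 2 + L.im ^ 2 := by
    rw [← Complex.normSq_eq_norm_sq, Complex.normSq_apply]; ring
  have hlc : 0 ≤ ‖L‖ + L.re := by have := (abs_le.1 (Complex.abs_re_le_norm L)).1; linarith
  have hlc2 : 0 ≤ ‖L‖ - L.re := by have := Complex.re_le_norm L; linarith
  rw [Complex.div_re, ← add_div, div_le_div_iff₀ hn (by linarith), Complex.normSq_apply]
  have key : 0 ≤ (‖L‖ + L.re) * w.im ^ 2 - 2 * L.im * w.re * w.im + (‖L‖ - L.re) * w.re ^ 2 := by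
    rcases hlc.eq_or_lt with h | h
    · have hd : L.im = 0 := by nlinarith
      rw [hd, ← h]; simp; positivity
    · have : 0 ≤ (‖L‖ + L.re) * ((‖L‖ + L.re) * w.im ^ 2 - 2 * L.im * w.re * w.im
          + (‖L‖ - L.re) * w.re ^ 2) := by
        have e : (‖L‖ + L.re) * ((‖L‖ + L.re) * w.im ^ 2 - 2 * L.im * w.re * w.im
          + (‖L‖ - L.re) * w.re ^ 2) = ((‖L‖ + L.re) * w.im - L.im * w.re) ^ 2 := by
          linear_combination w.re ^ 2 * hl
        rw [e]; positivity
      exact nonneg_of_mul_nonneg_right this h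
  nlinarith

lemma main_term_re_le {z : ℂ} {k : ℕ} (hk : 0 < k) {w : ℂ} (hw : 0 < w.re) :
    (dilog (z ^ k) / ((k : ℂ) ^ 2 * w)).re ≤ fk k z ^ 2 / w.re := by
  have hk' : (0 : ℝ) < k := by exact_mod_cast hk
  rw [fk_sq k z]
  have h := re_div_le (dilog (z ^ k)) w hw
  have e : dilog (z ^ k) / ((k : ℂ) ^ 2 * w) = (((1 / (k : ℝ) ^ 2 : ℝ)) : ℂ) *
      (dilog (z ^ k) / w) := by
    push_cast
    field_simp
  rw [e, Complex.re_ofReal_mul]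
  calc _ ≤ 1 / (k : ℝ) ^ 2 * _ := mul_le_mul_of_nonneg_left h (by positivity)
    _ = _ := by field_simp

lemma norm_exp_sub_one_ge {s β : ℝ} (hs : 0 ≤ s) (hβ : |β| ≤ Real.pi) :
    2 / Real.pi * |β| ≤ ‖Complex.exp (s + β * I) - 1‖ := by
  have hR : 1 ≤ Real.exp s := Real.one_le_exp hs
  have hsq : ‖Complex.exp (s + β * I) - 1‖ ^ 2 =
      Real.exp s ^ 2 - 2 * Real.exp s * Real.cos β + 1 := by
    rw [← Complex.normSq_eq_norm_sq, Complex.normSq_apply]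
    simp [Complex.exp_re, Complex.exp_im]
    have := Real.sin_sq_add_cos_sq β
    linear_combination Real.exp s ^ 2 * this
  have h2 : (2 * Real.sin (|β| / 2)) ^ 2 ≤ ‖Complex.exp (s + β * I) - 1‖ ^ 2 := by
    rw [hsq]
    have hc : Real.cos β = 1 - 2 * Real.sin (|β| / 2) ^ 2 := by
      have h := Real.cos_two_mul (|β| / 2)
      have h' := Real.sin_sq_add_cos_sq (|β| / 2)
      rw [mul_div_cancel₀ _ (two_ne_zero), Real.cos_abs] at h
      linarith
    have h1 := Real.cos_le_one β
    nlinarith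
  have h3 : 2 / Real.pi * (|β| / 2) ≤ Real.sin (|β| / 2) :=
    Real.mul_le_sin (by positivity) (by linarith)
  have h4 : 2 / Real.pi * |β| ≤ 2 * Real.sin (|β| / 2) := by linarith
  refine h4.trans (le_of_sq_le_sq ?_ (norm_nonneg _))
  exact h2

lemma norm_kernel_eq (w : ℂ) (j : ℕ) :
    ‖Complex.exp (-w) ^ j / (1 - Complex.exp (-w) ^ j)‖ = 1 / ‖Complex.exp (j * w) - 1‖ := by
  have h := ph_eq (η := 1) (s := j * w)
  have e : Complex.exp (-w) ^ j = Complex.exp (-(j * w)) := by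
    rw [← Complex.exp_nat_mul]; congr 1; ring
  rw [one_mul] at h
  rw [e, h, norm_div, norm_one]

lemma norm_kernel_le {σ y : ℝ} (hσ : 0 < σ) {j : ℕ} (hj : 0 < j) :
    σ * ‖Complex.exp (-(σ + y * I)) ^ j / (1 - Complex.exp (-(σ + y * I)) ^ j)‖ ≤ 1 := by
  rw [norm_kernel_eq]
  have h := norm_exp_sub_ge (η := 1) (s := (j : ℂ) * (σ + y * I)) (by simp)
  have hj' : (1 : ℝ) ≤ j := by exact_mod_cast hj
  have e : ((j : ℂ) * (σ + y * I)).re = j * σ := by simp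
  rw [e] at h
  have h2 : σ ≤ ‖Complex.exp (j * (σ + y * I)) - 1‖ := by nlinarith
  rw [mul_one_div]
  exact div_le_one_of_le₀ h2 (norm_nonneg _)

lemma norm_kernel_le' {σ y C : ℝ} (hσ : 0 < σ) (hC : 0 < C) {j : ℕ}
    (hbad : ∀ m : ℤ, C * σ < |j * y - 2 * Real.pi * m|) :
    σ * ‖Complex.exp (-(σ + y * I)) ^ j / (1 - Complex.exp (-(σ + y * I)) ^ j)‖ ≤ 2 / C := by
  rw [norm_kernel_eq]
  set m : ℤ := round (j * y / (2 * Real.pi))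
  set β : ℝ := j * y - 2 * Real.pi * m with hβ
  have hpi := Real.pi_pos
  have hβ1 : |β| ≤ Real.pi := by
    have h := abs_sub_round (j * y / (2 * Real.pi))
    have e : β = 2 * Real.pi * (j * y / (2 * Real.pi) - m) := by rw [hβ]; field_simp
    rw [e, abs_mul, abs_of_pos (by positivity)]
    nlinarith
  have hβ2 := hbad m
  have e : Complex.exp (j * (σ + y * I)) = Complex.exp (((j * σ : ℝ) : ℂ) + β * I) := by
    rw [Complex.exp_eq_exp_iff_exists_int]
    refine ⟨m, ?_⟩
    rw [hβ]; push_cast; ring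
  have h := norm_exp_sub_one_ge (s := j * σ) (β := β) (by positivity) hβ1
  rw [← e] at h
  have h3 : 2 / Real.pi * (C * σ) ≤ ‖Complex.exp (j * (σ + y * I)) - 1‖ :=
    le_trans (mul_le_mul_of_nonneg_left hβ2.le (by positivity)) h
  have h4 : 0 < 2 / Real.pi * (C * σ) := by positivity
  calc σ * (1 / ‖Complex.exp (j * (σ + y * I)) - 1‖) ≤ σ * (1 / (2 / Real.pi * (C * σ))) := by
        gcongr
    _ = Real.pi / (2 * C) := by field_simp
    _ ≤ 4 / (2 * C) := by gcongr; exact Real.pi_le_four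
    _ = 2 / C := by field_simp; norm_num

lemma SS_bound_of_good {z : ℂ} (hz : ‖z‖ < 1) {ε : ℝ} (hε : 0 < ε) :
    ∃ J : ℕ, ∃ C : ℝ, 0 < C ∧ ∀ σ y : ℝ, 0 < σ →
      (∀ j : ℕ, 0 < j → j < J → ∀ m : ℤ, C * σ < |j * y - 2 * Real.pi * m|) →
      (SS z (Complex.exp (-(σ + y * I)))).re ≤ ε / σ := by
  have hgeo := summable_geometric_of_lt_one (norm_nonneg z) hz
  obtain ⟨J, hJ⟩ : ∃ J : ℕ, (∑' j : ℕ, ‖z‖ ^ (j + J)) < ε / 2 :=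
    (((tendsto_sum_nat_add fun j => ‖z‖ ^ j).eventually (gt_mem_nhds (half_pos hε)))).exists
  set M := ∑' j : ℕ, ‖z‖ ^ j with hM
  have hM0 : 0 ≤ M := tsum_nonneg fun j => by positivity
  refine ⟨J, 4 * (M + 1) / ε, by positivity, fun σ y hσ hgood => ?_⟩
  set C := 4 * (M + 1) / ε with hCdef
  have hC : 0 < C := by positivity
  set u := Complex.exp (-(σ + y * I))
  set t : ℕ → ℂ := fun j => z ^ j / (j : ℂ) * (u ^ j / (1 - u ^ j))
  have ht : ∀ j, ‖t j‖ ≤ ‖z‖ ^ j * σ⁻¹ := by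
    intro j
    rcases Nat.eq_zero_or_pos j with rfl | hj
    · simp [t]; exact hσ.le
    · have h1 := norm_kernel_le (y := y) hσ hj
      simp only [t]
      rw [norm_mul]
      refine mul_le_mul (norm_pow_div_le z j) ?_ (norm_nonneg _) (by positivity)
      rwa [← one_div, le_div_iff₀ hσ, mul_comm]
  have hts : Summable t := Summable.of_norm_bounded (hgeo.mul_right _) ht
  have hsplit : SS z u = ∑ j ∈ Finset.range J, t j + ∑' j, t (j + J) :=
    (hts.sum_add_tsum_nat_add J).symm
  have h1 : ‖∑ j ∈ Finset.range J, t j‖ ≤ M * (2 / C * σ⁻¹) := by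
    refine (norm_sum_le _ _).trans ?_
    have : ∀ j ∈ Finset.range J, ‖t j‖ ≤ ‖z‖ ^ j * (2 / C * σ⁻¹) := by
      intro j hj
      rcases Nat.eq_zero_or_pos j with rfl | hj0
      · simp [t]; positivity
      · have h1 := norm_kernel_le' (y := y) hσ hC (hgood j hj0 (Finset.mem_range.1 hj))
        simp only [t]
        rw [norm_mul]
        refine mul_le_mul (norm_pow_div_le z j) ?_ (norm_nonneg _) (by positivity)
        rwa [← div_eq_mul_inv, le_div_iff₀ hσ, mul_comm]
    refine (Finset.sum_le_sum this).trans ?_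
    rw [← Finset.sum_mul]
    refine mul_le_mul_of_nonneg_right ?_ (by positivity)
    exact hgeo.sum_le_tsum _ fun _ _ => by positivity
  have h2 : ‖∑' j, t (j + J)‖ ≤ (∑' j : ℕ, ‖z‖ ^ (j + J)) * σ⁻¹ := by
    rw [← tsum_mul_right]
    have hs2 : Summable fun j : ℕ => ‖z‖ ^ (j + J) * σ⁻¹ :=
      ((summable_nat_add_iff (f := fun j : ℕ => ‖z‖ ^ j) J).2 hgeo).mul_right _
    exact tsum_of_norm_bounded hs2.hasSum fun j => ht (j + J)
  have h3 : M * (2 / C) ≤ ε / 2 := by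
    rw [hCdef]
    have : M * (2 / (4 * (M + 1) / ε)) = M / (M + 1) * (ε / 2) := by field_simp; norm_num
    rw [this]
    have h5 : M / (M + 1) ≤ 1 := (div_le_one (by linarith)).2 (by linarith)
    nlinarith
  have hσi : 0 < σ⁻¹ := inv_pos.2 hσ
  calc (SS z u).re ≤ ‖SS z u‖ := Complex.re_le_norm _
    _ ≤ M * (2 / C * σ⁻¹) + (∑' j : ℕ, ‖z‖ ^ (j + J)) * σ⁻¹ := by
        rw [hsplit]; exact (norm_add_le _ _).trans (add_le_add h1 h2)
    _ ≤ ε / 2 * σ⁻¹ + ε / 2 * σ⁻¹ := by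
        refine add_le_add ?_ (mul_le_mul_of_nonneg_right hJ.le hσi.le)
        rw [← mul_assoc]; exact mul_le_mul_of_nonneg_right h3 hσi.le
    _ = ε / σ := by field_simp; norm_num

lemma roots_finite (J : ℕ) : {ζ : ℂ | ∃ j, 0 < j ∧ j < J ∧ ζ ^ j = 1}.Finite := by
  have : {ζ : ℂ | ∃ j, 0 < j ∧ j < J ∧ ζ ^ j = 1} ⊆
      ⋃ j ∈ Finset.range J, {ζ : ℂ | 0 < j ∧ ζ ^ j = 1} := by
    rintro ζ ⟨j, h1, h2, h3⟩
    simp only [Set.mem_iUnion, Finset.mem_range]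
    exact ⟨j, h2, h1, h3⟩
  refine Set.Finite.subset (Set.Finite.biUnion (Finset.finite_toSet _) fun j _ => ?_) this
  rcases Nat.eq_zero_or_pos j with rfl | hj
  · simp
  · refine ((Polynomial.nthRootsFinset j (1 : ℂ)).finite_toSet).subset ?_
    rintro ζ ⟨_, h⟩
    simpa [Polynomial.mem_nthRootsFinset hj] using h

lemma AA_bound_unif {z : ℂ} (hz : ‖z‖ < 1) (J : ℕ) {C : ℝ} (hC : 0 ≤ C) :
    ∃ K : ℝ, 0 ≤ K ∧ ∀ ζ : ℂ, (∃ j, 0 < j ∧ j < J ∧ ζ ^ j = 1) → ∀ w ∈ cone C, ‖AA z ζ w‖ ≤ K := by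
  have h : ∀ ζ : ℂ, ∃ K : ℝ, (∃ j, 0 < j ∧ j < J ∧ ζ ^ j = 1) → ∀ w ∈ cone C, ‖AA z ζ w‖ ≤ K := by
    intro ζ
    by_cases hζ : ∃ j, 0 < j ∧ j < J ∧ ζ ^ j = 1
    · obtain ⟨j, h1, h2, h3⟩ := hζ
      obtain ⟨K, _, hK⟩ := AA_bound hz h1 h3 hC
      exact ⟨K, fun _ => hK⟩
    · exact ⟨0, fun h => absurd h hζ⟩
  choose K hK using h
  obtain ⟨B, hB⟩ := ((roots_finite J).image K).bddAbove
  refine ⟨max B 0, le_max_right _ _, fun ζ hζ w hw => ?_⟩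
  exact (hK ζ hζ w hw).trans ((hB ⟨ζ, hζ, rfl⟩).trans (le_max_left _ _))

lemma SS_upper {z : ℂ} (hz : ‖z‖ < 1) {ε : ℝ} (hε : 0 < ε) :
    ∃ C : ℝ, 0 < C ∧ ∃ σ0 : ℝ, 0 < σ0 ∧ ∀ σ y : ℝ, 0 < σ → σ < σ0 →
      (SS z (Complex.exp (-(σ + y * I)))).re ≤ ε / σ ∨
      ∃ k : ℕ, 0 < k ∧ ∃ β : ℝ, |β| ≤ C * σ ∧
        IsPrimitiveRoot (Complex.exp (-((y - β : ℝ) * I))) k ∧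
        (SS z (Complex.exp (-(σ + y * I)))).re ≤ (fk k z ^ 2 + ε) / σ := by
  obtain ⟨J, C, hC, hgood⟩ := SS_bound_of_good hz hε
  obtain ⟨K, hK0, hK⟩ := AA_bound_unif hz J hC.le
  refine ⟨C, hC, ε / (K + 1), by positivity, fun σ y hσ hσ0 => ?_⟩
  by_cases hg : ∀ j : ℕ, 0 < j → j < J → ∀ m : ℤ, C * σ < |j * y - 2 * Real.pi * m|
  · exact Or.inl (hgood σ y hσ hg)
  right
  push Not at hg
  obtain ⟨j, hj0, hjJ, m, hm⟩ := hg
  have hj' : (1 : ℝ) ≤ j := by exact_mod_cast hj0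
  have hjp : (0 : ℝ) < j := by linarith
  set β : ℝ := (j * y - 2 * Real.pi * m) / j with hβ
  have hβ1 : |β| ≤ C * σ := by
    rw [hβ, abs_div, abs_of_pos hjp]
    exact (div_le_self (abs_nonneg _) hj').trans hm
  set ζ := Complex.exp (-((y - β : ℝ) * I)) with hζdef
  have hζj : ζ ^ j = 1 := by
    rw [hζdef, ← Complex.exp_nat_mul, Complex.exp_eq_one_iff]
    refine ⟨-m, ?_⟩
    have : (j : ℝ) * (y - β) = 2 * Real.pi * m := by rw [hβ]; field_simp; ring
    have hc : (j : ℂ) * ((y - β : ℝ) : ℂ) = 2 * Real.pi * m := by exact_mod_cast this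
    push_cast at hc ⊢
    linear_combination (-I) * hc
  have hfo : IsOfFinOrder ζ := isOfFinOrder_iff_pow_eq_one.2 ⟨j, hj0, hζj⟩
  have hk : 0 < orderOf ζ := hfo.orderOf_pos
  refine ⟨orderOf ζ, hk, β, hβ1, IsPrimitiveRoot.orderOf ζ, ?_⟩
  have hu : Complex.exp (-(σ + y * I)) = ζ * Complex.exp (-(σ + β * I)) := by
    rw [hζdef, ← Complex.exp_add]; congr 1; push_cast; ring
  have hre : ((σ : ℂ) + β * I).re = σ := by simp
  have him : ((σ : ℂ) + β * I).im = β := by simp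
  rw [hu, SS_decomp hz hk (IsPrimitiveRoot.orderOf ζ) (by rw [hre]; exact hσ), Complex.add_re]
  have h1 := main_term_re_le (z := z) hk (w := (σ : ℂ) + β * I) (by rw [hre]; exact hσ)
  rw [hre] at h1
  have h2 : (AA z ζ (σ + β * I)).re ≤ K := (Complex.re_le_norm _).trans
    (hK ζ ⟨j, hj0, hjJ, hζj⟩ _ ⟨by rw [hre]; exact hσ, by rw [hre, him]; exact hβ1⟩)
  have h3 : K ≤ ε / σ := by
    rw [le_div_iff₀ hσ]
    rw [lt_div_iff₀ (by positivity)] at hσ0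
    nlinarith
  rw [add_div]
  linarith

lemma SS_cont {z : ℂ} (hz : ‖z‖ < 1) {v : ℝ → ℂ} (hv : Continuous v) {ρ : ℝ} (hρ : ρ < 1)
    (h : ∀ y, ‖v y‖ ≤ ρ) : Continuous fun y => SS z (v y) := by
  have hj1 : ∀ j : ℕ, 0 < j → ∀ y, ‖v y ^ j‖ ≤ ρ := by
    intro j hj y
    rw [norm_pow]
    exact (pow_le_of_le_one (norm_nonneg _) ((h y).trans hρ.le) hj.ne').trans (h y)
  have hge : ∀ j : ℕ, 0 < j → ∀ y, 1 - ρ ≤ ‖1 - v y ^ j‖ := by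
    intro j hj y
    have := norm_sub_norm_le (1 : ℂ) (v y ^ j)
    rw [norm_one] at this
    have := hj1 j hj y
    linarith
  refine continuous_tsum (u := fun j : ℕ => ‖z‖ ^ j * (1 - ρ)⁻¹) ?_ (summable_pow_mul hz _) ?_
  · intro j
    rcases Nat.eq_zero_or_pos j with rfl | hj
    · simpa using continuous_const
    · refine continuous_const.mul ((hv.pow j).div (continuous_const.sub (hv.pow j)) fun y h0 => ?_)
      have := hge j hj y
      rw [h0, norm_zero] at this
      linarith
  · intro j y
    rcases Nat.eq_zero_or_pos j with rfl | hj
    · simp; exact hρ.le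
    · rw [norm_mul]
      refine mul_le_mul (norm_pow_div_le z j) ?_ (by positivity) (by positivity)
      rw [← one_div, norm_div]
      exact div_le_div₀ zero_le_one ((hj1 j hj y).trans hρ.le) (by linarith) (hge j hj y)

/-- the rescaled path -/
noncomputable def wq (v : ℂ) (q t : ℝ) : ℂ := (v + (t / q : ℝ) * I) / ((q ^ 2 : ℝ) : ℂ)

lemma wq_re (v : ℂ) (q t : ℝ) : (wq v q t).re = v.re / q ^ 2 := by
  unfold wq
  rw [Complex.div_ofReal_re]; simp

lemma wq_im (v : ℂ) (q t : ℝ) : (wq v q t).im = (v.im + t / q) / q ^ 2 := by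
  unfold wq
  rw [Complex.div_ofReal_im]; simp

/-- the rescaled integrand -/
noncomputable def Hq (z ζ v : ℂ) (q t : ℝ) : ℂ :=
  Complex.exp (SS z (ζ * Complex.exp (-(wq v q t))) + q ^ 4 * wq v q t - 2 * q ^ 2 * v)

lemma Hq_cont {z ζ v : ℂ} (hz : ‖z‖ < 1) (hζ : ‖ζ‖ = 1) (hv : 0 < v.re) {q : ℝ} (hq : 0 < q) :
    Continuous (Hq z ζ v q) := by
  have hw : Continuous (wq v q) := by unfold wq; fun_prop
  have h1 : Continuous fun t => SS z (ζ * Complex.exp (-(wq v q t))) := by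
    refine SS_cont hz (by fun_prop) (ρ := Real.exp (-(v.re / q ^ 2))) ?_ fun y => ?_
    · rw [Real.exp_lt_one_iff]
      have : 0 < v.re / q ^ 2 := by positivity
      linarith
    · rw [norm_mul, hζ, one_mul, Complex.norm_exp, Complex.neg_re, wq_re]
  unfold Hq
  fun_prop

lemma Hq_eq {z ζ v : ℂ} {k : ℕ} (hz : ‖z‖ < 1) (hk : 0 < k) (hζ : IsPrimitiveRoot ζ k)
    (hv : v ^ 2 = dilog (z ^ k) / (k : ℂ) ^ 2) (hvre : 0 < v.re) {q : ℝ} (hq : 0 < q) (t : ℝ) :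
    Hq z ζ v q t = Complex.exp (-(t ^ 2 / (v + (t / q : ℝ) * I)) + AA z ζ (wq v q t)) := by
  unfold Hq
  rw [SS_decomp hz hk hζ (by rw [wq_re]; positivity)]
  congr 1
  have hx : v + (t / q : ℝ) * I ≠ 0 := by
    intro h
    have := congrArg Complex.re h
    simp at this
    linarith
  have hqc : (q : ℂ) ≠ 0 := by exact_mod_cast hq.ne'
  have hkc : (k : ℂ) ≠ 0 := by exact_mod_cast hk.ne'
  have hD : dilog (z ^ k) = v ^ 2 * (k : ℂ) ^ 2 := by rw [hv]; field_simp
  rw [hD]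
  have h1 : v ^ 2 * (k : ℂ) ^ 2 / ((k : ℂ) ^ 2 * wq v q t) =
      q ^ 2 * v ^ 2 / (v + (t / q : ℝ) * I) := by
    unfold wq
    push_cast at hx ⊢
    field_simp
  have h2 : (q : ℂ) ^ 4 * wq v q t = q ^ 2 * (v + (t / q : ℝ) * I) := by
    unfold wq
    push_cast
    field_simp
  rw [h1, h2]
  set x : ℂ := (t / q : ℝ) * I with hxdef
  have h3 : (t : ℂ) ^ 2 = -(q ^ 2 * x ^ 2) := by
    rw [hxdef, mul_pow, I_sq]
    push_cast
    field_simp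
  rw [h3]
  field_simp
  ring

lemma re_bound {v : ℂ} {C : ℝ} (hvre : 0 < v.re) {s t : ℝ} (hs : |v.im + s| ≤ C * v.re) :
    (-((t : ℂ) ^ 2 / (v + s * I))).re ≤ -(1 / (v.re * (1 + C ^ 2))) * t ^ 2 := by
  have hre : (v + s * I).re = v.re := by simp
  have him : (v + s * I).im = v.im + s := by simp
  have hC : 0 < 1 + C ^ 2 := by positivity
  have h2 : (v.im + s) ^ 2 ≤ (C * v.re) ^ 2 := sq_le_sq' (by linarith [(abs_le.1 hs).1])
    ((abs_le.1 hs).2)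
  rw [Complex.neg_re, ← Complex.ofReal_pow, Complex.div_re, Complex.normSq_apply, hre, him,
    Complex.ofReal_re, Complex.ofReal_im, zero_mul, zero_div, add_zero, neg_mul, neg_le_neg_iff]
  rw [div_mul_eq_mul_div, one_mul, div_le_div_iff₀ (by positivity) (by nlinarith [sq_nonneg (v.im + s)])]
  have h3 : v.re * v.re + (v.im + s) * (v.im + s) ≤ v.re * (v.re * (1 + C ^ 2)) := by nlinarith
  calc _ ≤ t ^ 2 * (v.re * (v.re * (1 + C ^ 2))) := mul_le_mul_of_nonneg_left h3 (sq_nonneg t)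
    _ = _ := by ring

lemma kappa_eq {v : ℂ} (hvre : 0 < v.re) :
    ∫ t : ℝ, Complex.exp (-((t : ℂ) ^ 2 / v)) = (Real.pi / (1 / v)) ^ (1 / 2 : ℂ) := by
  have hv0 : v ≠ 0 := by rintro rfl; simp at hvre
  have h := integral_gaussian_complex (b := 1 / v) (by
    rw [one_div, Complex.inv_re]
    exact div_pos hvre (Complex.normSq_pos.2 hv0))
  rw [← h]
  congr 1
  ext t
  congr 1
  ring

lemma kappa_ne {v : ℂ} (hvre : 0 < v.re) :
    ∫ t : ℝ, Complex.exp (-((t : ℂ) ^ 2 / v)) ≠ 0 := by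
  have hv0 : v ≠ 0 := by rintro rfl; simp at hvre
  rw [kappa_eq hvre]
  intro h
  rw [Complex.cpow_eq_zero_iff] at h
  have hpi : (Real.pi : ℂ) ≠ 0 := by exact_mod_cast Real.pi_ne_zero
  have : (Real.pi : ℂ) / (1 / v) ≠ 0 := div_ne_zero hpi (one_div_ne_zero hv0)
  exact this h.1

lemma Hq_tendsto {z ζ v : ℂ} {k : ℕ} {C : ℝ} (hz : ‖z‖ < 1) (hk : 0 < k) (hζ : IsPrimitiveRoot ζ k)
    (hv : v ^ 2 = dilog (z ^ k) / (k : ℂ) ^ 2) (hvre : 0 < v.re) (hC : |v.im| < C * v.re) :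
    Tendsto (fun q : ℝ => ∫ t in (q * (-(C * v.re) - v.im))..(q * (C * v.re - v.im)), Hq z ζ v q t)
      atTop (nhds (Complex.exp (A0 z ζ) * ∫ t : ℝ, Complex.exp (-((t : ℂ) ^ 2 / v)))) := by
  have hC0 : 0 ≤ C := by
    by_contra h
    push Not at h
    have := abs_nonneg v.im
    nlinarith
  obtain ⟨hC1, hC2⟩ := abs_lt.1 hC
  have hζn : ‖ζ‖ = 1 := norm_eq_one_of_pow_eq_one hζ.pow_eq_one hk.ne'
  have hv0 : v ≠ 0 := by rintro rfl; simp at hvre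
  obtain ⟨K, hK0, hK⟩ := AA_bound hz hk hζ.pow_eq_one hC0
  set lo : ℝ → ℝ := fun q => q * (-(C * v.re) - v.im)
  set hi : ℝ → ℝ := fun q => q * (C * v.re - v.im)
  have hcone : ∀ q : ℝ, 0 < q → ∀ t ∈ Set.Ioc (lo q) (hi q), |v.im + t / q| ≤ C * v.re ∧
      wq v q t ∈ cone C := by
    intro q hq t ht
    have h1 : |v.im + t / q| ≤ C * v.re := by
      have h3 : -(C * v.re) - v.im ≤ t / q := by
        rw [le_div_iff₀ hq]; have := ht.1.le; simp only [lo] at this; linarith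
      have h4 : t / q ≤ C * v.re - v.im := by
        rw [div_le_iff₀ hq]; have := ht.2; simp only [hi] at this; linarith
      rw [abs_le]; constructor <;> linarith
    refine ⟨h1, ?_, ?_⟩
    · rw [wq_re]; positivity
    · rw [wq_re, wq_im, abs_div, abs_of_pos (show 0 < q ^ 2 by positivity), ← mul_div_assoc]
      gcongr
  set c : ℝ := 1 / (v.re * (1 + C ^ 2))
  have hc : 0 < c := by positivity
  have hmain : Tendsto (fun q : ℝ => ∫ t : ℝ, (Set.Ioc (lo q) (hi q)).indicator (Hq z ζ v q) t)
      atTop (nhds (∫ t : ℝ, Complex.exp (-((t : ℂ) ^ 2 / v) + A0 z ζ))) := by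
    refine MeasureTheory.tendsto_integral_filter_of_dominated_convergence
      (fun t => Real.exp (-c * t ^ 2) * Real.exp K) ?_ ?_ ?_ ?_
    · filter_upwards [eventually_gt_atTop 0] with q hq
      exact (Hq_cont hz hζn hvre hq).aestronglyMeasurable.indicator measurableSet_Ioc
    · filter_upwards [eventually_gt_atTop 0] with q hq
      refine Eventually.of_forall fun t => ?_
      by_cases ht : t ∈ Set.Ioc (lo q) (hi q)
      · rw [Set.indicator_of_mem ht, Hq_eq hz hk hζ hv hvre hq, Complex.norm_exp, Complex.add_re,
          Real.exp_add]
        obtain ⟨h1, h2⟩ := hcone q hq t ht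
        have h3 := re_bound (t := t) hvre h1
        have h4 := (Complex.re_le_norm _).trans (hK _ h2)
        gcongr
      · rw [Set.indicator_of_notMem ht, norm_zero]
        positivity
    · exact (integrable_exp_neg_mul_sq hc).mul_const _
    · refine Eventually.of_forall fun t => ?_
      have hlo : Tendsto lo atTop atBot := by
        simp only [lo]
        exact tendsto_id.atTop_mul_const_of_neg (by linarith)
      have hhi : Tendsto hi atTop atTop := by
        simp only [hi]
        exact tendsto_id.atTop_mul_const (by linarith)
      have hmem : ∀ᶠ q in atTop, t ∈ Set.Ioc (lo q) (hi q) := by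
        filter_upwards [hlo.eventually (eventually_lt_atBot t),
          hhi.eventually (eventually_ge_atTop t)] with q h1 h2 using ⟨h1, h2⟩
      have hd : Tendsto (fun q : ℝ => ((t / q : ℝ) : ℂ) * I) atTop (nhds 0) := by
        have h1 : Tendsto (fun q : ℝ => t / q) atTop (nhds 0) := tendsto_const_nhds.div_atTop tendsto_id
        have h2 := ((Complex.continuous_ofReal.tendsto 0).comp h1).mul_const I
        simpa using h2
      have hvd : Tendsto (fun q : ℝ => v + ((t / q : ℝ) : ℂ) * I) atTop (nhds v) := by
        simpa using hd.const_add v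
      have hw : Tendsto (fun q : ℝ => wq v q t) atTop (nhdsWithin 0 (cone C)) := by
        refine tendsto_nhdsWithin_iff.2 ⟨?_, ?_⟩
        · have h1 : Tendsto (fun q : ℝ => (q ^ 2)⁻¹) atTop (nhds 0) :=
            tendsto_inv_atTop_zero.comp (tendsto_pow_atTop two_ne_zero)
          have h2 := hvd.mul ((Complex.continuous_ofReal.tendsto 0).comp h1)
          rw [Complex.ofReal_zero, mul_zero] at h2
          refine h2.congr fun q => ?_
          unfold wq
          simp [div_eq_mul_inv]
        · filter_upwards [hmem, eventually_gt_atTop 0] with q h1 h2 using (hcone q h2 t h1).2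
      have hA := (AA_tendsto hz hk hζ.pow_eq_one hC0).comp hw
      have hq : Tendsto (fun q : ℝ => -((t : ℂ) ^ 2 / (v + (t / q : ℝ) * I))) atTop
          (nhds (-((t : ℂ) ^ 2 / v))) := (tendsto_const_nhds.div hvd hv0).neg
      have hfin := (Complex.continuous_exp.tendsto _).comp (hq.add hA)
      refine hfin.congr' ?_
      filter_upwards [hmem, eventually_gt_atTop 0] with q h1 h2
      rw [Set.indicator_of_mem h1, Hq_eq hz hk hζ hv hvre h2]
      rfl
  have e : Complex.exp (A0 z ζ) * ∫ t : ℝ, Complex.exp (-((t : ℂ) ^ 2 / v)) =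
      ∫ t : ℝ, Complex.exp (-((t : ℂ) ^ 2 / v) + A0 z ζ) := by
    simp_rw [Complex.exp_add]
    rw [MeasureTheory.integral_mul_const, mul_comm]
  rw [e]
  refine hmain.congr' ?_
  filter_upwards [eventually_gt_atTop 0] with q hq
  rw [intervalIntegral.integral_of_le, MeasureTheory.integral_indicator measurableSet_Ioc]
  exact mul_le_mul_of_nonneg_left (by linarith) hq.le

lemma re_aux (a b : ℝ) : ((a : ℂ) + b * I).re = a := by simp

lemma im_aux (a b : ℝ) : ((a : ℂ) + b * I).im = b := by simp

lemma major {z ζ v : ℂ} {k : ℕ} {C : ℝ} (hz : ‖z‖ < 1) (hk : 0 < k) (hζ : IsPrimitiveRoot ζ k)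
    (hv : v ^ 2 = dilog (z ^ k) / (k : ℂ) ^ 2) (hvre : 0 < v.re) (hC : |v.im| < C * v.re) :
    Tendsto (fun q : ℝ => q ^ 3 * Complex.exp (-(2 * q ^ 2 * v)) *
      ∫ β in (-(C * (v.re / q ^ 2)))..(C * (v.re / q ^ 2)),
        Complex.exp (SS z (ζ * Complex.exp (-((v.re / q ^ 2 : ℝ) + β * I)))) *
          Complex.exp (q ^ 4 * ((v.re / q ^ 2 : ℝ) + β * I)))
      atTop (nhds (Complex.exp (A0 z ζ) * ∫ t : ℝ, Complex.exp (-((t : ℂ) ^ 2 / v)))) := by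
  refine (Hq_tendsto hz hk hζ hv hvre hC).congr' ?_
  filter_upwards [eventually_gt_atTop 0] with q hq
  have hqc : (q : ℂ) ≠ 0 := by exact_mod_cast hq.ne'
  have h := intervalIntegral.smul_integral_comp_mul_add (a := q * (-(C * v.re) - v.im))
    (b := q * (C * v.re - v.im))
    (fun β : ℝ => Complex.exp (SS z (ζ * Complex.exp (-((v.re / q ^ 2 : ℝ) + β * I)))) *
          Complex.exp (q ^ 4 * ((v.re / q ^ 2 : ℝ) + β * I))) ((q ^ 3)⁻¹) (v.im / q ^ 2)
  have e1 : (q ^ 3)⁻¹ * (q * (-(C * v.re) - v.im)) + v.im / q ^ 2 = -(C * (v.re / q ^ 2)) := by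
    field_simp; ring
  have e2 : (q ^ 3)⁻¹ * (q * (C * v.re - v.im)) + v.im / q ^ 2 = C * (v.re / q ^ 2) := by
    field_simp; ring
  rw [e1, e2] at h
  rw [← h, Complex.real_smul]
  have e3 : ∀ X : ℂ, (q : ℂ) ^ 3 * Complex.exp (-(2 * q ^ 2 * v)) * (((q ^ 3)⁻¹ : ℝ) * X) =
      Complex.exp (-(2 * q ^ 2 * v)) * X := by
    intro X
    push_cast
    field_simp
  rw [e3, ← intervalIntegral.integral_const_mul]
  congr 1
  ext t
  have hw : ((v.re / q ^ 2 : ℝ) : ℂ) + (((q ^ 3)⁻¹ * t + v.im / q ^ 2 : ℝ) : ℂ) * I = wq v q t := by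
    apply Complex.ext
    · rw [wq_re, re_aux]
    · rw [wq_im, im_aux]; field_simp; ring
  simp only [hw]
  unfold Hq
  rw [← Complex.exp_add, ← Complex.exp_add]
  congr 1
  ring

/-- The integrand of the circle method. -/
noncomputable def gq (z : ℂ) (a q y : ℝ) : ℂ :=
  Complex.exp (SS z (Complex.exp (-((a / q ^ 2 : ℝ) + y * I)))) *
    Complex.exp (q ^ 4 * ((a / q ^ 2 : ℝ) + y * I))

lemma gq_cont {z : ℂ} (hz : ‖z‖ < 1) {a q : ℝ} (ha : 0 < a) (hq : 0 < q) :
    Continuous (gq z a q) := by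
  have h1 : Continuous fun y : ℝ => SS z (Complex.exp (-((a / q ^ 2 : ℝ) + y * I))) := by
    refine SS_cont hz (by fun_prop) (ρ := Real.exp (-(a / q ^ 2))) ?_ fun y => ?_
    · rw [Real.exp_lt_one_iff]
      have : 0 < a / q ^ 2 := by positivity
      linarith
    · rw [norm_exp_neg_w]
  unfold gq
  fun_prop

lemma split_bound {g : ℝ → ℂ} (hg : Continuous g) {lo c d hi B : ℝ} (h1 : lo ≤ c) (h2 : c ≤ d)
    (h3 : d ≤ hi) (hB0 : 0 ≤ B) (hB : ∀ y ∈ Set.Icc lo hi, (y ≤ c ∨ d ≤ y) → ‖g y‖ ≤ B) :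
    ‖(∫ y in lo..hi, g y) - ∫ y in c..d, g y‖ ≤ B * (hi - lo) := by
  have hi1 : ∀ x y : ℝ, IntervalIntegrable g MeasureTheory.volume x y :=
    fun x y => hg.intervalIntegrable x y
  have e : (∫ y in lo..hi, g y) - ∫ y in c..d, g y = (∫ y in lo..c, g y) + ∫ y in d..hi, g y := by
    rw [← intervalIntegral.integral_add_adjacent_intervals (hi1 lo c) (hi1 c hi),
      ← intervalIntegral.integral_add_adjacent_intervals (hi1 c d) (hi1 d hi)]
    ring
  rw [e]
  have b1 : ‖∫ y in lo..c, g y‖ ≤ B * |c - lo| := by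
    refine intervalIntegral.norm_integral_le_of_norm_le_const fun y hy => ?_
    rw [Set.uIoc_of_le h1] at hy
    exact hB y ⟨hy.1.le, by linarith [hy.2]⟩ (Or.inl hy.2)
  have b2 : ‖∫ y in d..hi, g y‖ ≤ B * |hi - d| := by
    refine intervalIntegral.norm_integral_le_of_norm_le_const fun y hy => ?_
    rw [Set.uIoc_of_le h3] at hy
    exact hB y ⟨by linarith [hy.1], hy.2⟩ (Or.inr hy.1.le)
  rw [abs_of_nonneg (by linarith)] at b1 b2
  refine (norm_add_le _ _).trans ((add_le_add b1 b2).trans ?_)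
  rw [← mul_add]
  exact mul_le_mul_of_nonneg_left (by linarith) hB0

lemma q3_tendsto {c : ℝ} (hc : 0 < c) (M : ℝ) :
    Tendsto (fun q : ℝ => q ^ 3 * Real.exp (-(c * q ^ 2)) * M) atTop (nhds 0) := by
  have h1 : Tendsto (fun q : ℝ => q ^ 3 * Real.exp (-c * q)) atTop (nhds 0) := by
    have := (Real.tendsto_pow_mul_exp_neg_atTop_nhds_zero 3).comp
      (tendsto_id.const_mul_atTop hc)
    have := this.const_mul ((c ^ 3)⁻¹)
    rw [mul_zero] at this
    refine this.congr fun q => ?_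
    simp
    field_simp
  have h2 : Tendsto (fun q : ℝ => q ^ 3 * Real.exp (-(c * q ^ 2))) atTop (nhds 0) := by
    refine squeeze_zero' ?_ ?_ h1
    · filter_upwards [eventually_gt_atTop 0] with q hq
      positivity
    · filter_upwards [eventually_ge_atTop 1] with q hq
      have : c * q ≤ c * q ^ 2 := by
        apply mul_le_mul_of_nonneg_left _ hc.le; nlinarith
      gcongr
      linarith
  simpa using h2.mul_const M

lemma window {z v : ℂ} {k : ℕ} (hz : ‖z‖ < 1) (hk : 0 < k)
    (hv : v ^ 2 = dilog (z ^ k) / (k : ℂ) ^ 2) (hvre : 0 < v.re) (hvfk : v.re = fk k z)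
    {δ : ℝ} (hδ : 0 < δ) (hdom : ∀ j : ℕ, 1 ≤ j → j ≠ k → fk j z ^ 2 ≤ fk k z ^ 2 - δ)
    {lo hi α : ℝ} (hα1 : lo < α) (hα2 : α < hi)
    (hprim : IsPrimitiveRoot (Complex.exp (-(α * I))) k)
    {η : ℝ} (hη : 0 < η) (huniq : ∀ y ∈ Set.Icc lo hi, ∀ β : ℝ, |β| < η →
      IsPrimitiveRoot (Complex.exp (-((y - β : ℝ) * I))) k → y - β = α) :
    Tendsto (fun q : ℝ => q ^ 3 * Complex.exp (-(2 * q ^ 2 * v)) * (∫ y in lo..hi, gq z v.re q y)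
      - Complex.exp (q ^ 4 * α * I) * (Complex.exp (A0 z (Complex.exp (-(α * I)))) *
        ∫ t : ℝ, Complex.exp (-((t : ℂ) ^ 2 / v)))) atTop (nhds 0) := by
  set a := v.re with ha
  set ζ := Complex.exp (-(α * I)) with hζ
  set ε := min δ (a ^ 2) / 2 with hεd
  have hε : 0 < ε := by have : 0 < min δ (a ^ 2) := lt_min hδ (by positivity); positivity
  have hεδ : 2 * ε ≤ δ := by rw [hεd]; linarith [min_le_left δ (a ^ 2)]
  have hεa : 2 * ε ≤ a ^ 2 := by rw [hεd]; linarith [min_le_right δ (a ^ 2)]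
  obtain ⟨C', hC', σ0, hσ0, hup⟩ := SS_upper hz hε
  set C := C' + 1 + |v.im| / a with hCd
  have hCpos : 0 < C := by positivity
  have hCC : C' < C := by
    have : 0 ≤ |v.im| / a := by positivity
    linarith
  have hCv : |v.im| < C * a := by
    rw [hCd, add_mul, div_mul_cancel₀ _ hvre.ne']
    nlinarith
  have hmaj := major hz hk hprim hv hvre hCv
  rw [← ha] at hmaj
  set L := Complex.exp (A0 z ζ) * ∫ t : ℝ, Complex.exp (-((t : ℂ) ^ 2 / v)) with hL
  set X : ℝ → ℂ := fun q => q ^ 3 * Complex.exp (-(2 * q ^ 2 * v)) *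
      ∫ β in (-(C * (a / q ^ 2)))..(C * (a / q ^ 2)),
        Complex.exp (SS z (ζ * Complex.exp (-((a / q ^ 2 : ℝ) + β * I)))) *
          Complex.exp (q ^ 4 * ((a / q ^ 2 : ℝ) + β * I)) with hX
  -- second piece
  have hp2 : Tendsto (fun q : ℝ => Complex.exp (q ^ 4 * α * I) * (X q - L)) atTop (nhds 0) := by
    rw [tendsto_zero_iff_norm_tendsto_zero]
    have h1 : Tendsto (fun q => ‖X q - L‖) atTop (nhds 0) := by
      rw [← tendsto_iff_norm_sub_tendsto_zero]; exact hmaj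
    refine h1.congr fun q => ?_
    have : ‖Complex.exp (q ^ 4 * α * I)‖ = 1 := by
      have := Complex.norm_exp_ofReal_mul_I (q ^ 4 * α)
      push_cast at this
      exact this
    rw [norm_mul, this, one_mul]
  have harc : ∀ q : ℝ, 0 < q → Complex.exp (q ^ 4 * α * I) * X q =
      q ^ 3 * Complex.exp (-(2 * q ^ 2 * v)) *
        ∫ y in (α - C * (a / q ^ 2))..(α + C * (a / q ^ 2)), gq z a q y := by
    intro q hq
    have h := intervalIntegral.integral_comp_add_right (a := -(C * (a / q ^ 2)))
      (b := C * (a / q ^ 2)) (gq z a q) α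
    have e1 : -(C * (a / q ^ 2)) + α = α - C * (a / q ^ 2) := by ring
    have e2 : C * (a / q ^ 2) + α = α + C * (a / q ^ 2) := by ring
    rw [e1, e2] at h
    rw [← h, hX]
    simp only
    rw [mul_left_comm, ← intervalIntegral.integral_const_mul]
    congr 2
    ext β
    unfold gq
    have e3 : Complex.exp (-((a / q ^ 2 : ℝ) + ((β + α : ℝ) : ℂ) * I)) =
        ζ * Complex.exp (-((a / q ^ 2 : ℝ) + β * I)) := by
      rw [hζ, ← Complex.exp_add]; congr 1; push_cast; ring
    have e4 : Complex.exp (q ^ 4 * ((a / q ^ 2 : ℝ) + ((β + α : ℝ) : ℂ) * I)) =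
        Complex.exp (q ^ 4 * α * I) * Complex.exp (q ^ 4 * ((a / q ^ 2 : ℝ) + β * I)) := by
      rw [← Complex.exp_add]; congr 1; push_cast; ring
    rw [e3, e4]
    ring
  have hσ : Tendsto (fun q : ℝ => a / q ^ 2) atTop (nhds 0) :=
    tendsto_const_nhds.div_atTop (tendsto_pow_atTop two_ne_zero)
  have hσC : Tendsto (fun q : ℝ => C * (a / q ^ 2)) atTop (nhds 0) := by
    simpa using hσ.const_mul C
  have hp1 : Tendsto (fun q : ℝ => q ^ 3 * Complex.exp (-(2 * q ^ 2 * v)) *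
      ((∫ y in lo..hi, gq z a q y) -
        ∫ y in (α - C * (a / q ^ 2))..(α + C * (a / q ^ 2)), gq z a q y)) atTop (nhds 0) := by
    rw [tendsto_zero_iff_norm_tendsto_zero]
    refine squeeze_zero' (Eventually.of_forall fun _ => norm_nonneg _) ?_
      (q3_tendsto (c := ε / a) (by positivity) (hi - lo))
    filter_upwards [eventually_gt_atTop 0, hσ.eventually (gt_mem_nhds hσ0),
      hσC.eventually (gt_mem_nhds (sub_pos.2 hα1)), hσC.eventually (gt_mem_nhds (sub_pos.2 hα2)),
      hσC.eventually (gt_mem_nhds hη)] with q hq hqσ hq1 hq2 hq3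
    have hσpos : 0 < a / q ^ 2 := by positivity
    have hCσ : 0 < C * (a / q ^ 2) := by positivity
    have hb := split_bound (gq_cont hz hvre hq) (lo := lo) (hi := hi)
      (c := α - C * (a / q ^ 2)) (d := α + C * (a / q ^ 2))
      (B := Real.exp ((a ^ 2 - ε) / (a / q ^ 2) + q ^ 4 * (a / q ^ 2)))
      (by linarith) (by linarith) (by linarith) (Real.exp_nonneg _) (by
        intro y hy hout
        unfold gq
        rw [← Complex.exp_add, Complex.norm_exp, Complex.add_re]
        have e5 : ((q : ℂ) ^ 4 * ((a / q ^ 2 : ℝ) + y * I)).re = q ^ 4 * (a / q ^ 2) := by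
          rw [← Complex.ofReal_pow, Complex.re_ofReal_mul, re_aux]
        rw [e5]
        refine Real.exp_le_exp.2 (add_le_add ?_ le_rfl)
        rcases hup (a / q ^ 2) y hσpos hqσ with h | ⟨j, hj, β, hβ, hpr, h⟩
        · refine h.trans ?_
          gcongr
          linarith
        · by_cases hjk : j = k
          · exfalso
            subst hjk
            have hlt : C' * (a / q ^ 2) < C * (a / q ^ 2) := mul_lt_mul_of_pos_right hCC hσpos
            have hβ' : |β| < C * (a / q ^ 2) := lt_of_le_of_lt hβ hlt
            have hu := huniq y hy β (hβ'.trans hq3) hpr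
            have := abs_lt.1 hβ'
            rcases hout with h' | h' <;> linarith
          · refine h.trans ?_
            have := hdom j hj hjk
            rw [← hvfk] at this
            gcongr
            linarith)
    rw [norm_mul, norm_mul, norm_pow, Complex.norm_real, Real.norm_of_nonneg hq.le,
      Complex.norm_exp]
    have e6 : (-(2 * (q : ℂ) ^ 2 * v)).re = -(2 * q ^ 2 * a) := by
      have : -(2 * (q : ℂ) ^ 2 * v) = ((-(2 * q ^ 2) : ℝ) : ℂ) * v := by push_cast; ring
      rw [this, Complex.re_ofReal_mul]; ring
    rw [e6]
    calc _ ≤ q ^ 3 * Real.exp (-(2 * q ^ 2 * a)) *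
          (Real.exp ((a ^ 2 - ε) / (a / q ^ 2) + q ^ 4 * (a / q ^ 2)) * (hi - lo)) := by
          gcongr
      _ = q ^ 3 * (Real.exp (-(2 * q ^ 2 * a)) *
          Real.exp ((a ^ 2 - ε) / (a / q ^ 2) + q ^ 4 * (a / q ^ 2))) * (hi - lo) := by ring
      _ = _ := by
          rw [← Real.exp_add]
          congr 3
          field_simp
          ring
  have hfin := hp1.add hp2
  rw [add_zero] at hfin
  refine hfin.congr' ?_
  filter_upwards [eventually_gt_atTop 0] with q hq
  rw [mul_sub (Complex.exp _), harc q hq]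
  ring

lemma prim_imp {x : ℝ} {k : ℕ} (hk : 0 < k) (h : IsPrimitiveRoot (Complex.exp (-(x * I))) k) :
    ∃ m : ℤ, (k : ℝ) * x = 2 * Real.pi * m ∧ (m = 0 → k = 1) := by
  have h1 := h.pow_eq_one
  rw [← Complex.exp_nat_mul, Complex.exp_eq_one_iff] at h1
  obtain ⟨m, hm⟩ := h1
  have hm2 : ((k * x : ℝ) : ℂ) = ((-(2 * Real.pi * m) : ℝ) : ℂ) := by
    have hI := I_ne_zero
    apply mul_right_cancel₀ hI
    push_cast
    linear_combination -hm
  have hm3 : (k : ℝ) * x = -(2 * Real.pi * m) := by exact_mod_cast hm2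
  refine ⟨-m, by push_cast; linarith, fun h0 => ?_⟩
  have hm0 : m = 0 := by omega
  rw [hm0] at hm3
  have hx : x = 0 := by
    have : (k : ℝ) ≠ 0 := by exact_mod_cast hk.ne'
    simpa [this] using hm3
  rw [hx] at h
  simp at h
  exact h

lemma A0_hasSum {z ζ : ℂ} (hz : ‖z‖ < 1) {k : ℕ} (hk : 0 < k) (hζ : ζ ^ k = 1) :
    HasSum (fun j : ℕ => z ^ j / (j : ℂ) * ph0 (ζ ^ j)) (A0 z ζ) := by
  refine Summable.hasSum (Summable.of_norm_bounded
    (summable_pow_mul hz (∑ i ∈ Finset.range k, ‖ph0 (ζ ^ i)‖)) fun j => ?_)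
  rw [norm_mul]
  refine mul_le_mul (norm_pow_div_le z j) ?_ (norm_nonneg _) (by positivity)
  have hj : ζ ^ j = ζ ^ (j % k) := by
    conv_lhs => rw [← Nat.div_add_mod j k, pow_add, pow_mul, hζ, one_pow, one_mul]
  rw [hj]
  exact Finset.single_le_sum (f := fun i => ‖ph0 (ζ ^ i)‖) (fun i _ => norm_nonneg _)
    (Finset.mem_range.2 (Nat.mod_lt j hk))

lemma ph0_diff {ζ : ℂ} (hζ : IsPrimitiveRoot ζ 3) (j : ℕ) :
    ph0 (ζ ^ j) - ph0 ((ζ ^ 2) ^ j) = (ζ ^ j - (ζ ^ 2) ^ j) / 3 := by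
  have h3 : ζ ^ 3 = 1 := hζ.pow_eq_one
  have hne1 : ζ ≠ 1 := hζ.ne_one (by norm_num)
  have hne2 : ζ ^ 2 ≠ 1 := hζ.pow_ne_one_of_pos_of_lt (by norm_num) (by norm_num)
  have hs : 1 + ζ + ζ ^ 2 = 0 := by
    have : (ζ - 1) * (1 + ζ + ζ ^ 2) = 0 := by linear_combination h3
    exact (mul_eq_zero.1 this).resolve_left (sub_ne_zero.2 hne1)
  have hd : ζ / (1 - ζ) - ζ ^ 2 / (1 - ζ ^ 2) = (ζ - ζ ^ 2) / 3 := by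
    have a1 : 1 - ζ ≠ 0 := sub_ne_zero.2 hne1.symm
    have a2 : 1 - ζ ^ 2 ≠ 0 := sub_ne_zero.2 hne2.symm
    rw [div_sub_div _ _ a1 a2, div_eq_div_iff (mul_ne_zero a1 a2) (by norm_num)]
    have : (1 - ζ) * (1 - ζ ^ 2) = 3 := by linear_combination h3 - hs
    rw [this]
    ring
  have hj : ∀ ξ : ℂ, ξ ^ 3 = 1 → ξ ^ j = ξ ^ (j % 3) := fun ξ hξ => by
    conv_lhs => rw [← Nat.div_add_mod j 3, pow_add, pow_mul, hξ, one_pow, one_mul]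
  have h3' : (ζ ^ 2) ^ 3 = 1 := by rw [← pow_mul, mul_comm, pow_mul, h3, one_pow]
  rw [hj ζ h3, hj (ζ ^ 2) h3']
  have hlt : j % 3 < 3 := Nat.mod_lt j (by norm_num)
  have h4 : (ζ ^ 2) ^ 2 = ζ := by linear_combination ζ * h3
  interval_cases j % 3
  · simp
  · simp only [pow_one]
    unfold ph0
    rw [if_neg hne1, if_neg hne2, hd]
  · rw [h4]
    unfold ph0
    rw [if_neg hne1, if_neg hne2]
    linear_combination -hd

lemma A0_ne {z ζ : ℂ} (hz : ‖z‖ < 1) (hζ : IsPrimitiveRoot ζ 3) (him : z.im ≠ 0) :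
    ‖Complex.exp (A0 z ζ)‖ ≠ ‖Complex.exp (A0 z (ζ ^ 2))‖ := by
  have h3 : ζ ^ 3 = 1 := hζ.pow_eq_one
  have h3' : (ζ ^ 2) ^ 3 = 1 := by rw [← pow_mul, mul_comm, pow_mul, h3, one_pow]
  have hn : ‖ζ‖ = 1 := norm_eq_one_of_pow_eq_one h3 (by norm_num)
  have hne1 : ζ ≠ 1 := hζ.ne_one (by norm_num)
  have hs : 1 + ζ + ζ ^ 2 = 0 := by
    have : (ζ - 1) * (1 + ζ + ζ ^ 2) = 0 := by linear_combination h3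
    exact (mul_eq_zero.1 this).resolve_left (sub_ne_zero.2 hne1)
  have hz1 : ‖ζ * z‖ < 1 := by rw [norm_mul, hn, one_mul]; exact hz
  have hz2 : ‖ζ ^ 2 * z‖ < 1 := by rw [norm_mul, norm_pow, hn, one_pow, one_mul]; exact hz
  have hd := (A0_hasSum hz (by norm_num) h3).sub (A0_hasSum hz (by norm_num) h3')
  have hl := ((Complex.hasSum_taylorSeries_neg_log hz1).sub
    (Complex.hasSum_taylorSeries_neg_log hz2)).div_const 3
  have he : A0 z ζ - A0 z (ζ ^ 2) =
      (-Complex.log (1 - ζ * z) - -Complex.log (1 - ζ ^ 2 * z)) / 3 := by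
    refine hd.unique (hl.congr_fun fun j => ?_)
    rw [← mul_sub, ph0_diff hζ j, mul_pow, mul_pow]
    ring
  intro heq
  rw [Complex.norm_exp, Complex.norm_exp, Real.exp_eq_exp] at heq
  have hre := congrArg Complex.re he
  have h3re : ((-Complex.log (1 - ζ * z) - -Complex.log (1 - ζ ^ 2 * z)) / 3).re =
      (-Real.log ‖1 - ζ * z‖ + Real.log ‖1 - ζ ^ 2 * z‖) / 3 := by
    have : (3 : ℂ) = ((3 : ℝ) : ℂ) := by norm_num
    rw [this, Complex.div_ofReal_re]
    simp [Complex.log_re]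
  rw [h3re, Complex.sub_re, heq, sub_self] at hre
  have hlog : Real.log ‖1 - ζ * z‖ = Real.log ‖1 - ζ ^ 2 * z‖ := by linarith
  have p : ∀ x : ℂ, ‖x‖ < 1 → 0 < ‖1 - x‖ := fun x hx => by
    have := norm_sub_norm_le (1 : ℂ) x
    rw [norm_one] at this
    linarith
  have hnn : ‖1 - ζ * z‖ = ‖1 - ζ ^ 2 * z‖ :=
    Real.log_injOn_pos (p _ hz1) (p _ hz2) hlog
  have hsq := congrArg (fun t => t ^ 2) hnn
  have hss : ζ ^ 2 = -1 - ζ := by linear_combination hs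
  rw [hss] at hsq
  simp only [← Complex.normSq_eq_norm_sq, Complex.normSq_apply] at hsq
  have r1 := congrArg Complex.re hs
  have i1 := congrArg Complex.im hs
  have hnsq : ζ.re * ζ.re + ζ.im * ζ.im = 1 := by
    rw [← Complex.normSq_apply, Complex.normSq_eq_norm_sq, hn, one_pow]
  simp [pow_two] at r1 i1 hsq
  have hζi : ζ.im ≠ 0 := by
    intro h0
    rw [h0] at r1 hnsq
    nlinarith
  have hre2 : ζ.re = -1 / 2 := by
    have : ζ.im * (1 + 2 * ζ.re) = 0 := by linarith
    have := (mul_eq_zero.1 this).resolve_left hζi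
    linarith
  rw [hre2] at hsq
  have him2 : ζ.im * ζ.im = 3 / 4 := by rw [hre2] at hnsq; linarith
  have : ζ.im * z.im = 0 := by
    have hz4 : 4 * (ζ.im * z.im) = 0 := by linear_combination hsq
    linarith
  exact (mul_ne_zero hζi him) this

lemma final_squeeze {z v : ℂ} (hvre : 0 < v.re) {c D : ℝ} (hc : 0 < c)
    (h : ∀ᶠ q : ℝ in atTop, ∀ n : ℕ, 1 ≤ n → (n : ℝ) = q ^ 4 →
      c ≤ ‖q ^ 3 * Complex.exp (-(2 * q ^ 2 * v)) * (2 * Real.pi * F n z)‖ ∧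
      ‖q ^ 3 * Complex.exp (-(2 * q ^ 2 * v)) * (2 * Real.pi * F n z)‖ ≤ D) :
    Tendsto (fun n : ℕ => Real.log ‖F n z‖ / n) atTop (nhds 0) := by
  set q : ℕ → ℝ := fun n => (n : ℝ) ^ (1 / 4 : ℝ) with hqd
  have hq : Tendsto q atTop atTop := (tendsto_rpow_atTop (by norm_num)).comp
    tendsto_natCast_atTop_atTop
  have hq4 : ∀ n : ℕ, (n : ℝ) = q n ^ 4 := fun n => by
    rw [hqd]
    simp only
    rw [← Real.rpow_natCast, ← Real.rpow_mul (by positivity)]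
    norm_num
  set M := |Real.log c| + |Real.log D| + |Real.log (2 * Real.pi)| + 3 + 2 * v.re with hM
  have hlim : Tendsto (fun n => M / q n ^ 2) atTop (nhds 0) :=
    tendsto_const_nhds.div_atTop ((tendsto_pow_atTop two_ne_zero).comp hq)
  refine squeeze_zero_norm' ?_ hlim
  filter_upwards [hq.eventually h, hq.eventually (eventually_ge_atTop 1),
    eventually_ge_atTop 1] with n hn hq1 hn1
  obtain ⟨h1, h2⟩ := hn n hn1 (hq4 n)
  have hqp : 0 < q n := by linarith
  have hF : 0 < ‖F n z‖ := by
    rw [norm_pos_iff]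
    intro h0
    rw [h0] at h1
    simp at h1
    linarith
  have e6 : (-(2 * (q n : ℂ) ^ 2 * v)).re = -(2 * q n ^ 2 * v.re) := by
    have : -(2 * (q n : ℂ) ^ 2 * v) = ((-(2 * q n ^ 2) : ℝ) : ℂ) * v := by push_cast; ring
    rw [this, Complex.re_ofReal_mul]; ring
  have e7 : ‖(q n : ℂ) ^ 3 * Complex.exp (-(2 * (q n : ℂ) ^ 2 * v)) * (2 * Real.pi * F n z)‖ =
      q n ^ 3 * Real.exp (-(2 * q n ^ 2 * v.re)) * ((2 * Real.pi) * ‖F n z‖) := by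
    rw [norm_mul, norm_mul, norm_pow, Complex.norm_real, Real.norm_of_nonneg hqp.le,
      Complex.norm_exp, e6, norm_mul]
    congr 2
    simp [abs_of_pos Real.pi_pos]
  rw [e7] at h1 h2
  have hpi := Real.pi_pos
  set Y := q n ^ 3 * Real.exp (-(2 * q n ^ 2 * v.re)) * ((2 * Real.pi) * ‖F n z‖) with hY
  have hYp : 0 < Y := by positivity
  have hlogY : Real.log Y = 3 * Real.log (q n) - 2 * q n ^ 2 * v.re +
      (Real.log (2 * Real.pi) + Real.log ‖F n z‖) := by
    rw [hY, Real.log_mul (by positivity) (by positivity), Real.log_mul (by positivity)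
      (by positivity), Real.log_exp, Real.log_pow, Real.log_mul (by positivity) hF.ne']
    push_cast; ring
  have l1 := Real.log_le_log hc h1
  have l2 := Real.log_le_log hYp h2
  have l3 : 0 ≤ Real.log (q n) := Real.log_nonneg hq1
  have l4 : Real.log (q n) ≤ q n := (Real.log_le_sub_one_of_pos hqp).trans (by linarith)
  have hqq : q n ≤ q n ^ 2 := by nlinarith
  have hq2 : 1 ≤ q n ^ 2 := by nlinarith
  have b1 := abs_le.1 (le_refl |Real.log c|)
  have b2 := abs_le.1 (le_refl |Real.log D|)
  have b3 := abs_le.1 (le_refl |Real.log (2 * Real.pi)|)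
  have key : |Real.log ‖F n z‖| ≤ M * q n ^ 2 := by
    have t1 : |Real.log c| ≤ |Real.log c| * q n ^ 2 := le_mul_of_one_le_right (abs_nonneg _) hq2
    have t2 : |Real.log D| ≤ |Real.log D| * q n ^ 2 := le_mul_of_one_le_right (abs_nonneg _) hq2
    have t3 : |Real.log (2 * Real.pi)| ≤ |Real.log (2 * Real.pi)| * q n ^ 2 :=
      le_mul_of_one_le_right (abs_nonneg _) hq2
    have t4 : M * q n ^ 2 = |Real.log c| * q n ^ 2 + |Real.log D| * q n ^ 2 +
      |Real.log (2 * Real.pi)| * q n ^ 2 + 3 * q n ^ 2 + 2 * q n ^ 2 * v.re := by rw [hM]; ring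
    have t5 : 0 ≤ 2 * q n ^ 2 * v.re := by positivity
    have a1 := abs_nonneg (Real.log c)
    have a2 := abs_nonneg (Real.log D)
    rw [t4, abs_le]
    constructor <;> linarith
  rw [norm_div, Real.norm_eq_abs, Real.norm_of_nonneg (by positivity), hq4 n,
    div_le_div_iff₀ (by positivity) (by positivity)]
  calc _ ≤ M * q n ^ 2 * q n ^ 2 := mul_le_mul_of_nonneg_right key (by positivity)
    _ = _ := by ring

lemma gq_integral {z : ℂ} (hz : ‖z‖ < 1) {a q : ℝ} (ha : 0 < a) (hq : 0 < q) {n : ℕ} (hn : 1 ≤ n)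
    (hnq : (n : ℝ) = q ^ 4) :
    ∫ y in (-(Real.pi / 2))..(3 * Real.pi / 2), gq z a q y = 2 * Real.pi * F n z := by
  rw [← cauchy_F hz hn (σ := a / q ^ 2) (by positivity)]
  have : (n : ℂ) = (q : ℂ) ^ 4 := by exact_mod_cast congrArg (fun x : ℝ => (x : ℂ)) hnq
  rw [this]
  rfl

lemma prim_one : IsPrimitiveRoot (Complex.exp (-(((0 : ℝ) : ℂ) * I))) 1 := by simp

lemma prim_two : IsPrimitiveRoot (Complex.exp (-(((Real.pi : ℝ) : ℂ) * I))) 2 := by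
  rw [Complex.exp_neg, Complex.exp_pi_mul_I]
  norm_num
  exact IsPrimitiveRoot.neg_one 0 (by norm_num)

lemma prim_three : IsPrimitiveRoot (Complex.exp (-(((2 * Real.pi / 3 : ℝ) : ℂ) * I))) 3 := by
  have h := (Complex.isPrimitiveRoot_exp 3 (by norm_num)).inv
  rw [← Complex.exp_neg] at h
  have e : -(((2 * Real.pi / 3 : ℝ) : ℂ) * I) = -(2 * Real.pi * I / ((3 : ℕ) : ℂ)) := by
    push_cast; ring
  rw [e]
  exact h

lemma prim_three_sq : Complex.exp (-(((4 * Real.pi / 3 : ℝ) : ℂ) * I)) =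
    Complex.exp (-(((2 * Real.pi / 3 : ℝ) : ℂ) * I)) ^ 2 := by
  rw [← Complex.exp_nat_mul]; congr 1; push_cast; ring

lemma norm_osc (q α : ℝ) (L : ℂ) : ‖Complex.exp (q ^ 4 * α * I) * L‖ = ‖L‖ := by
  have := Complex.norm_exp_ofReal_mul_I (q ^ 4 * α)
  push_cast at this
  rw [norm_mul, this, one_mul]

lemma single_case {z v : ℂ} {k : ℕ} (hz : ‖z‖ < 1) (hk : 0 < k)
    (hv : v ^ 2 = dilog (z ^ k) / (k : ℂ) ^ 2) (hvre : 0 < v.re) (hvfk : v.re = fk k z)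
    {δ : ℝ} (hδ : 0 < δ) (hdom : ∀ j : ℕ, 1 ≤ j → j ≠ k → fk j z ^ 2 ≤ fk k z ^ 2 - δ)
    {α : ℝ} (hα1 : -(Real.pi / 2) < α) (hα2 : α < 3 * Real.pi / 2)
    (hprim : IsPrimitiveRoot (Complex.exp (-(α * I))) k)
    {η : ℝ} (hη : 0 < η) (huniq : ∀ y ∈ Set.Icc (-(Real.pi / 2)) (3 * Real.pi / 2), ∀ β : ℝ,
      |β| < η → IsPrimitiveRoot (Complex.exp (-((y - β : ℝ) * I))) k → y - β = α) :
    Tendsto (fun n : ℕ => Real.log ‖F n z‖ / n) atTop (nhds 0) := by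
  have hw := window hz hk hv hvre hvfk hδ hdom hα1 hα2 hprim hη huniq
  set L := Complex.exp (A0 z (Complex.exp (-(α * I)))) *
        ∫ t : ℝ, Complex.exp (-((t : ℂ) ^ 2 / v)) with hL
  have hL0 : 0 < ‖L‖ := norm_pos_iff.2 (mul_ne_zero (Complex.exp_ne_zero _) (kappa_ne hvre))
  rw [tendsto_zero_iff_norm_tendsto_zero] at hw
  refine final_squeeze hvre (c := ‖L‖ / 2) (D := 2 * ‖L‖) (half_pos hL0) ?_
  filter_upwards [hw.eventually (gt_mem_nhds (half_pos hL0)), eventually_gt_atTop 0] with q h hq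
  intro n hn hnq
  rw [gq_integral hz hvre hq hn hnq] at h
  set X := (q : ℂ) ^ 3 * Complex.exp (-(2 * q ^ 2 * v)) * (2 * Real.pi * F n z)
  have e := norm_osc q α L
  have h1 := abs_le.1 (abs_norm_sub_norm_le X (Complex.exp (q ^ 4 * α * I) * L))
  rw [e] at h1
  constructor <;> linarith [h1.1, h1.2]

lemma triple_case {z v : ℂ} (hz : ‖z‖ < 1) (him : z.im ≠ 0)
    (hv : v ^ 2 = dilog (z ^ 3) / ((3 : ℕ) : ℂ) ^ 2) (hvre : 0 < v.re) (hvfk : v.re = fk 3 z)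
    {δ : ℝ} (hδ : 0 < δ) (hdom : ∀ j : ℕ, 1 ≤ j → j ≠ 3 → fk j z ^ 2 ≤ fk 3 z ^ 2 - δ) :
    Tendsto (fun n : ℕ => Real.log ‖F n z‖ / n) atTop (nhds 0) := by
  have hpi := Real.pi_pos
  have hprim2 : IsPrimitiveRoot (Complex.exp (-(((4 * Real.pi / 3 : ℝ) : ℂ) * I))) 3 := by
    rw [prim_three_sq]
    exact prim_three.pow_of_coprime 2 (by norm_num)
  have hw1 := window hz (k := 3) (by norm_num) hv hvre hvfk hδ hdom (lo := -(Real.pi / 2))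
    (hi := Real.pi) (α := 2 * Real.pi / 3) (by linarith) (by linarith) prim_three
    (η := Real.pi / 12) (by linarith) (by
      intro y hy β hβ hp
      obtain ⟨m, hm, hm0⟩ := prim_imp (by norm_num) hp
      have hβ' := abs_lt.1 hβ
      have := hy.1
      have := hy.2
      push_cast at hm
      have h1 : (m : ℝ) < 2 := by
        by_contra hcon; push Not at hcon; nlinarith
      have h2 : (-1 : ℝ) < m := by
        by_contra hcon; push Not at hcon; nlinarith
      have h1' : m < 2 := by exact_mod_cast h1
      have h2' : -1 < m := by exact_mod_cast h2
      have h3 : m ≠ 0 := fun h => by have := hm0 h; omega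
      have h4 : m = 1 := by omega
      rw [h4] at hm; push_cast at hm; linarith)
  have hw2 := window hz (k := 3) (by norm_num) hv hvre hvfk hδ hdom (lo := Real.pi)
    (hi := 3 * Real.pi / 2) (α := 4 * Real.pi / 3) (by linarith) (by linarith) hprim2
    (η := Real.pi / 12) (by linarith) (by
      intro y hy β hβ hp
      obtain ⟨m, hm, hm0⟩ := prim_imp (by norm_num) hp
      have hβ' := abs_lt.1 hβ
      have := hy.1
      have := hy.2
      push_cast at hm
      have h1 : (m : ℝ) < 3 := by
        by_contra hcon; push Not at hcon; nlinarith
      have h2 : (1 : ℝ) < m := by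
        by_contra hcon; push Not at hcon; nlinarith
      have h1' : m < 3 := by exact_mod_cast h1
      have h2' : 1 < m := by exact_mod_cast h2
      have h4 : m = 2 := by omega
      rw [h4] at hm; push_cast at hm; linarith)
  set κ := ∫ t : ℝ, Complex.exp (-((t : ℂ) ^ 2 / v)) with hκ
  have hκ0 : κ ≠ 0 := kappa_ne hvre
  set L1 := Complex.exp (A0 z (Complex.exp (-(((2 * Real.pi / 3 : ℝ) : ℂ) * I)))) * κ with hL1
  set L2 := Complex.exp (A0 z (Complex.exp (-(((4 * Real.pi / 3 : ℝ) : ℂ) * I)))) * κ with hL2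
  have hne : ‖L1‖ ≠ ‖L2‖ := by
    rw [hL1, hL2, prim_three_sq, norm_mul, norm_mul]
    intro h
    exact A0_ne hz prim_three him (mul_right_cancel₀ (norm_ne_zero_iff.2 hκ0) h)
  set d := |‖L1‖ - ‖L2‖| with hd
  have hd0 : 0 < d := abs_pos.2 (sub_ne_zero.2 hne)
  have hw := hw1.add hw2
  rw [add_zero, tendsto_zero_iff_norm_tendsto_zero] at hw
  refine final_squeeze hvre (c := d / 2) (D := d + ‖L1‖ + ‖L2‖) (half_pos hd0) ?_
  filter_upwards [hw.eventually (gt_mem_nhds (half_pos hd0)), eventually_gt_atTop 0] with q h hq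
  intro n hn hnq
  have hi1 : ∀ x y : ℝ, IntervalIntegrable (gq z v.re q) MeasureTheory.volume x y :=
    fun x y => (gq_cont hz hvre hq).intervalIntegrable x y
  have hsum : (∫ y in (-(Real.pi / 2))..Real.pi, gq z v.re q y) +
      (∫ y in Real.pi..(3 * Real.pi / 2), gq z v.re q y) = 2 * Real.pi * F n z := by
    rw [intervalIntegral.integral_add_adjacent_intervals (hi1 _ _) (hi1 _ _),
      gq_integral hz hvre hq hn hnq]
  set X := (q : ℂ) ^ 3 * Complex.exp (-(2 * q ^ 2 * v)) * (2 * Real.pi * F n z) with hX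
  set Y1 := Complex.exp (q ^ 4 * ((2 * Real.pi / 3 : ℝ) : ℂ) * I) * L1
  set Y2 := Complex.exp (q ^ 4 * ((4 * Real.pi / 3 : ℝ) : ℂ) * I) * L2
  have n1 : ‖Y1‖ = ‖L1‖ := norm_osc q _ L1
  have n2 : ‖Y2‖ = ‖L2‖ := norm_osc q _ L2
  have h' : ‖X - (Y1 + Y2)‖ < d / 2 := by
    refine lt_of_eq_of_lt ?_ h
    rw [hX, ← hsum]
    congr 1
    ring
  have h1 := abs_le.1 (abs_norm_sub_norm_le X (Y1 + Y2))
  have h2 : ‖Y1 + Y2‖ ≤ ‖L1‖ + ‖L2‖ := by rw [← n1, ← n2]; exact norm_add_le _ _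
  have h3 : d ≤ ‖Y1 + Y2‖ := by
    have := abs_norm_sub_norm_le Y1 (-Y2)
    rw [norm_neg, n1, n2, sub_neg_eq_add] at this
    exact this
  constructor <;> linarith [h1.1, h1.2]

/-- Inside the unit disk, away from `0` and in the interior of one of the regions,
`(1/n)·ln|Fₙ(z)| → 0`. -/
theorem log_abs_partition_poly_inside (z : ℂ) (hz0 : 0 < ‖z‖) (hz1 : ‖z‖ < 1)
    (hz : z ∈ interior R1 ∨ z ∈ interior R2 ∨ z ∈ interior R3) :
    Tendsto (fun n : ℕ => Real.log ‖F n z‖ / n) atTop (nhds 0) := by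
  obtain ⟨k, hk, hpos, δ, hδ, hdom⟩ := dominating hz0 hz1 hz
  have hpi := Real.pi_pos
  have hk0 : 0 < k := by omega
  set v : ℂ := ((1 / (k : ℝ) : ℝ) : ℂ) * (dilog (z ^ k)) ^ (1 / 2 : ℂ) with hvd
  have hvfk : v.re = fk k z := by rw [hvd, Complex.re_ofReal_mul]; rfl
  have hvre : 0 < v.re := by rw [hvfk]; exact hpos
  have hv : v ^ 2 = dilog (z ^ k) / (k : ℂ) ^ 2 := by
    rw [hvd, mul_pow, cpow_half_sq]; push_cast; field_simp
  rcases hk with rfl | rfl | ⟨rfl, him⟩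
  · refine single_case hz1 hk0 hv hvre hvfk hδ hdom (α := 0) (by linarith) (by linarith)
      prim_one (η := Real.pi / 4) (by linarith) ?_
    intro y hy β hβ hp
    obtain ⟨m, hm, hm0⟩ := prim_imp (by norm_num) hp
    have hβ' := abs_lt.1 hβ
    have := hy.1
    have := hy.2
    push_cast at hm
    have h1 : (m : ℝ) < 1 := by
      by_contra hcon; push Not at hcon; nlinarith
    have h2 : (-1 : ℝ) < m := by
      by_contra hcon; push Not at hcon; nlinarith
    have h1' : m < 1 := by exact_mod_cast h1
    have h2' : -1 < m := by exact_mod_cast h2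
    have h4 : m = 0 := by omega
    rw [h4] at hm; push_cast at hm; linarith
  · refine single_case hz1 hk0 hv hvre hvfk hδ hdom (α := Real.pi) (by linarith) (by linarith)
      prim_two (η := Real.pi / 4) (by linarith) ?_
    intro y hy β hβ hp
    obtain ⟨m, hm, hm0⟩ := prim_imp (by norm_num) hp
    have hβ' := abs_lt.1 hβ
    have := hy.1
    have := hy.2
    push_cast at hm
    have h1 : (m : ℝ) < 2 := by
      by_contra hcon; push Not at hcon; nlinarith
    have h2 : (-1 : ℝ) < m := by
      by_contra hcon; push Not at hcon; nlinarith
    have h1' : m < 2 := by exact_mod_cast h1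
    have h2' : -1 < m := by exact_mod_cast h2
    have h3 : m ≠ 0 := fun h => by have := hm0 h; omega
    have h4 : m = 1 := by omega
    rw [h4] at hm; push_cast at hm; linarith
  · exact triple_case hz1 him hv hvre hvfk hδ hdom
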